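/- arXiv:2111.08949 — 6 statements merged into one kernel-verified Lean document; each statement's English description precedes it below -/
import Mathlib

section
/- For every n ∈ ℕ there exists q_0 > 0 such that for every 0 < q ≤ q_0 one has χ(ℝ^n_∞, G(q)) = n+1: there exists a colouring of ℝ^n with n+1 colours such that no colour class contains an isometric copy of G(q), but for every colouring of ℝ^n with n colours some colour class contains an isometric copy of G(q). -/
open Set Filter

/-- The set `A` (in the metric space `β`) contains an isometric copy of the
metric (sub)space `M` (a subset of the metric space `α`). -/
def HasCopy {α β : Type*} [MetricSpace α] [MetricSpace β] (M : Set α) (A : Set β) : Prop :=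
  ∃ f : α → β, (∀ x ∈ M, ∀ y ∈ M, dist (f x) (f y) = dist x y) ∧ f '' M ⊆ A

/-- `G(q) = {0, 1, 1+q, 1+q+q², …} ⊆ ℝ`. -/
def geomSet (q : ℝ) : Set ℝ :=
  Set.range (fun m : ℕ => ∑ i ∈ Finset.range m, q ^ i)

/-!
Only the rapid decay of the gaps `δ i = q ^ i` matters.

*Upper bound.* Let `N = n + 1`. Some real `a` makes each of the first `2N` products `a * δ i`
congruent modulo `N` to a number in `[1/2, 1]`. Up to multiples of `N`, the points
`a * (u ± (δ 0 + ⋯ + δ (k - 1)))`, `k ≤ 2N`, then move monotonically in steps of length at most `1`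
over a distance at least `N`, so their integer parts take all residues modulo `N`. Colour `x ∈ ℝ^n`
by a residue that is not taken by `⌊a * x d⌋` for any coordinate `d`. Given an isometric copy of a
subset of `ℝ` with a least and a greatest point, some coordinate runs through a translate of this
subset or of its reflection; here this coordinate excludes each of the colours somewhere.

*Lower bound.* Let `r k` be the sum of the gaps from the `k`-th on, so that the set is isometric to
`{r 0, r 1, …}`. Points `x k` with `x k d = w d - r k`, whose other coordinates differ from those
of `w` by slightly less than `r k`, form a copy of this set. If no class contains a copy, then for
every colour `d` (identified with a coordinate) and every `w`, one of the faces around `w` in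
direction `d` avoids the colour `d`. Choosing such faces with rapidly decreasing radii, one for each
direction, one finds a point common to all of them; it cannot have any colour.
-/

/-- Lacunary sequences: positive reals, each at most `q` times the preceding one. Both the gaps of
the set and their tail sums are of this kind. -/
structure IsLacunary (q : ℝ) (r : ℕ → ℝ) : Prop where
  pos : ∀ i, 0 < r i
  succ_le : ∀ i, r (i + 1) ≤ q * r i

namespace IsLacunary

variable {q : ℝ} {r : ℕ → ℝ}

lemma ratio_pos (hr : IsLacunary q r) : 0 < q :=
  pos_of_mul_pos_left ((hr.pos 1).trans_le (hr.succ_le 0)) (hr.pos 0).le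

lemma shift (hr : IsLacunary q r) : IsLacunary q fun i => r (i + 1) :=
  ⟨fun i => hr.pos (i + 1), fun i => hr.succ_le (i + 1)⟩

lemma antitone (hr : IsLacunary q r) (hq : q ≤ 1) : Antitone r :=
  antitone_nat_of_succ_le fun i =>
    (hr.succ_le i).trans (mul_le_of_le_one_left (hr.pos i).le hq)

lemma le_mul_of_lt (hr : IsLacunary q r) (hq : q ≤ 1) {i j : ℕ} (hij : i < j) :
    r j ≤ q * r i :=
  (hr.antitone hq hij).trans (hr.succ_le i)

lemma summable (hr : IsLacunary q r) (hq : q < 1) : Summable r :=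
  summable_of_ratio_norm_eventually_le hq <| Eventually.of_forall fun i => by
    simpa only [Real.norm_of_nonneg (hr.pos _).le] using hr.succ_le i

lemma tail (hr : IsLacunary q r) (hq : q < 1) : IsLacunary q fun k => ∑' i, r (i + k) where
  pos k := ((summable_nat_add_iff k).2 (hr.summable hq)).tsum_pos
    (fun i => (hr.pos (i + k)).le) 0 (hr.pos _)
  succ_le k := by
    have hsum (j : ℕ) : Summable fun i => r (i + j) :=
      (summable_nat_add_iff j).2 (hr.summable hq)
    rw [← tsum_mul_left]
    exact (hsum (k + 1)).tsum_le_tsum (fun i => hr.succ_le (i + k)) ((hsum k).mul_left q)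

end IsLacunary

lemma isLacunary_pow {q p : ℝ} (hq : 0 < q) (hqp : q ≤ p) : IsLacunary p fun i => q ^ i where
  pos i := pow_pos hq i
  succ_le i := by
    rw [pow_succ']
    exact mul_le_mul_of_nonneg_right hqp (pow_pos hq i).le

lemma HasCopy.trans {α β γ : Type*} [MetricSpace α] [MetricSpace β] [MetricSpace γ]
    {M : Set α} {A : Set β} {B : Set γ} (hMA : HasCopy M A) (hAB : HasCopy A B) :
    HasCopy M B := by
  obtain ⟨f, hf, hfA⟩ := hMA
  obtain ⟨g, hg, hgB⟩ := hAB
  rw [image_subset_iff] at hfA hgB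
  refine ⟨g ∘ f, fun x hx y hy => ?_, image_subset_iff.2 fun x hx => hgB (hfA hx)⟩
  rw [Function.comp_apply, Function.comp_apply, hg _ (hfA hx) _ (hfA hy), hf x hx y hy]

lemma hasCopy_of_subset {α : Type*} [MetricSpace α] {M A : Set α} (h : M ⊆ A) : HasCopy M A :=
  ⟨id, fun _ _ _ _ => rfl, by rwa [image_id]⟩

lemma hasCopy_range {ι α β : Type*} [Nonempty ι] [MetricSpace α] [MetricSpace β]
    {r : ι → α} {x : ι → β} {A : Set β} (hdist : ∀ i j, dist (x i) (x j) = dist (r i) (r j))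
    (hA : ∀ i, x i ∈ A) : HasCopy (range r) A := by
  have hfactor : x.FactorsThrough r := fun i j hij =>
    dist_eq_zero.1 (by rw [hdist, hij, dist_self])
  refine ⟨Function.extend r x fun _ => x (Classical.arbitrary ι), ?_, ?_⟩
  · rintro _ ⟨i, rfl⟩ _ ⟨j, rfl⟩
    rw [hfactor.extend_apply, hfactor.extend_apply, hdist]
  · rintro _ ⟨_, ⟨i, rfl⟩, rfl⟩
    rw [hfactor.extend_apply]
    exact hA i

lemma exists_eq_of_succ_le_add_one {h : ℕ → ℤ} {K : ℕ} (hstep : ∀ k < K, h (k + 1) ≤ h k + 1)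
    {t : ℤ} (h0 : h 0 ≤ t) (hK : t ≤ h K) : ∃ k ≤ K, h k = t := by
  induction K with
  | zero => exact ⟨0, le_rfl, h0.antisymm hK⟩
  | succ K ih =>
    by_cases ht : t ≤ h K
    · obtain ⟨k, hk, hkt⟩ := ih (fun k hk => hstep k (by lia)) ht
      exact ⟨k, by lia, hkt⟩
    · have := hstep K (by lia)
      exact ⟨K + 1, le_rfl, by lia⟩

lemma exists_intCast_zmod_eq_of_succ_le_add_one {N : ℕ} [NeZero N] {h : ℕ → ℤ} {K : ℕ}
    (hstep : ∀ k < K, h (k + 1) ≤ h k + 1) (hK : h 0 + N ≤ h K) (c : ZMod N) :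
    ∃ k ≤ K, (h k : ZMod N) = c := by
  have hlt : (c - h 0).val < N := ZMod.val_lt _
  obtain ⟨k, hk, hkt⟩ := exists_eq_of_succ_le_add_one hstep
    (t := h 0 + (c - h 0).val) (by lia) (by lia)
  exact ⟨k, hk, by simp [hkt]⟩

section Floor

variable {N : ℕ} [NeZero N] {s : ℕ → ℝ} {K : ℕ}

lemma exists_floor_add_zmod_eq (hstep : ∀ k < K, s (k + 1) ≤ s k + 1) (hK : s 0 + N ≤ s K)
    (v : ℝ) (c : ZMod N) : ∃ k ≤ K, (⌊v + s k⌋ : ZMod N) = c := by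
  refine exists_intCast_zmod_eq_of_succ_le_add_one (h := fun k => ⌊v + s k⌋) (fun k hk => ?_) ?_ c
  · rw [← Int.floor_add_one]
    exact Int.floor_le_floor (by linarith [hstep k hk])
  · rw [← Int.floor_add_natCast]
    exact Int.floor_le_floor (by linarith)

lemma exists_floor_sub_zmod_eq (hstep : ∀ k < K, s (k + 1) ≤ s k + 1) (hK : s 0 + N ≤ s K)
    (v : ℝ) (c : ZMod N) : ∃ k ≤ K, (⌊v - s k⌋ : ZMod N) = c := by
  have hceil_step (k : ℕ) (hk : k < K) : ⌈s (k + 1) - v⌉ ≤ ⌈s k - v⌉ + 1 := by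
    rw [← Int.ceil_add_one]
    exact Int.ceil_le_ceil (by linarith [hstep k hk])
  have hceil_total : ⌈s 0 - v⌉ + N ≤ ⌈s K - v⌉ := by
    rw [← Int.ceil_add_natCast]
    exact Int.ceil_le_ceil (by linarith)
  obtain ⟨k, hk, hkc⟩ := exists_intCast_zmod_eq_of_succ_le_add_one
    (h := fun k => ⌈s k - v⌉) hceil_step hceil_total (-c)
  refine ⟨k, hk, ?_⟩
  rw [← neg_sub, Int.floor_neg, Int.cast_neg, hkc, neg_neg]

end Floor

lemma floor_add_natCast_mul_zmod {R : Type*} [Ring R] [LinearOrder R] [IsStrictOrderedRing R]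
    [FloorRing R] (N : ℕ) (v : R) (m : ℤ) : (⌊v + N * m⌋ : ZMod N) = ⌊v⌋ := by
  have : v + N * m = v + ((N * m : ℤ) : R) := by push_cast; rfl
  rw [this, Int.floor_add_intCast]
  simp

/-- A colouring of the line for which each translate of `M` and of its reflection `-M` has points
of all the colours. Such colourings of the coordinates yield colourings of the product. -/
def IsPolychromatic {κ : Type*} (T : ℝ → κ) (M : Set ℝ) : Prop :=
  ∀ u j, (∃ x ∈ M, T (u + x) = j) ∧ ∃ x ∈ M, T (u - x) = j

lemma IsLacunary.exists_scale {q p : ℝ} {δ : ℕ → ℝ} (hδ : IsLacunary q δ) (hp : 0 < p)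
    (hpq : 2 * (p + 1) * q ≤ 1) (K : ℕ) :
    ∃ a, ∀ t ∈ Icc a (a + 1 / (2 * δ 0)), ∀ i < K, ∃ m : ℤ, t * δ i - p * m ∈ Icc (1 / 2) 1 := by
  induction K generalizing δ with
  | zero => exact ⟨0, by simp⟩
  | succ K ih =>
    obtain ⟨a, ha⟩ := ih hδ.shift
    have hδ0 : 0 < δ 0 := hδ.pos 0
    set m : ℤ := ⌈a * δ 0 / p⌉
    have hm_ge : a * δ 0 ≤ p * m := (div_le_iff₀' hp).1 (Int.le_ceil _)
    have hm_lt : p * m < a * δ 0 + p := by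
      rw [← lt_div_iff₀' hp, add_div, div_self hp.ne']
      exact Int.ceil_lt_add_one _
    have hgap : (p + 1) / δ 0 ≤ 1 / (2 * δ 1) := by
      rw [div_le_div_iff₀ hδ0 (mul_pos two_pos (hδ.pos 1))]
      calc (p + 1) * (2 * δ 1) ≤ (p + 1) * (2 * (q * δ 0)) := by gcongr; exact hδ.succ_le 0
        _ = 2 * (p + 1) * q * δ 0 := by ring
        _ ≤ 1 * δ 0 := by gcongr
    have hstart : a ≤ (p * m + 1 / 2) / δ 0 := by
      rw [le_div_iff₀ hδ0]; linarith
    have hend : (p * m + 1) / δ 0 ≤ a + 1 / (2 * δ 1) := by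
      calc (p * m + 1) / δ 0 ≤ (a * δ 0 + (p + 1)) / δ 0 := by gcongr ?_ / _; linarith
        _ = a + (p + 1) / δ 0 := by field_simp
        _ ≤ a + 1 / (2 * δ 1) := by gcongr
    have hlength : (p * m + 1 / 2) / δ 0 + 1 / (2 * δ 0) = (p * m + 1) / δ 0 := by
      field_simp; ring
    refine ⟨(p * m + 1 / 2) / δ 0, fun t ht i hi => ?_⟩
    rw [hlength] at ht
    cases i with
    | zero =>
      have hlow := (div_le_iff₀ hδ0).1 ht.1
      have hhigh := (le_div_iff₀ hδ0).1 ht.2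
      exact ⟨m, by linarith, by linarith⟩
    | succ i => exact ha t ⟨hstart.trans ht.1, ht.2.trans hend⟩ i (by lia)

lemma IsLacunary.exists_isPolychromatic {q : ℝ} {δ : ℕ → ℝ} (hδ : IsLacunary q δ)
    (N : ℕ) [NeZero N] (hNq : 2 * ((N : ℝ) + 1) * q ≤ 1) :
    ∃ T : ℝ → ZMod N,
      IsPolychromatic T ((fun k => ∑ i ∈ Finset.range k, δ i) '' Iic (2 * N)) := by
  have hN : (0 : ℝ) < N := Nat.cast_pos.2 (NeZero.pos N)
  obtain ⟨a, ha⟩ := hδ.exists_scale hN hNq (2 * N)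
  have hδ0 := hδ.pos 0
  choose! m hm using ha a ⟨le_rfl, by simp only [le_add_iff_nonneg_right]; positivity⟩
  let s : ℕ → ℝ := fun k => ∑ i ∈ Finset.range k, (a * δ i - N * m i)
  have hstep : ∀ k < 2 * N, s (k + 1) ≤ s k + 1 := fun k hk => by
    simp only [s, Finset.sum_range_succ]
    linarith [(hm k hk).2]
  have htotal : s 0 + N ≤ s (2 * N) := by
    have := Finset.card_nsmul_le_sum (Finset.range (2 * N)) (fun i => a * δ i - N * m i) (1 / 2)
      fun i hi => (hm i (Finset.mem_range.1 hi)).1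
    simp only [Finset.card_range, nsmul_eq_mul, Nat.cast_mul, Nat.cast_ofNat] at this
    simp only [s, Finset.sum_range_zero]
    linarith
  have hs (k : ℕ) : a * ∑ i ∈ Finset.range k, δ i =
      s k + N * ((∑ i ∈ Finset.range k, m i : ℤ) : ℝ) := by
    simp only [s, Finset.sum_sub_distrib, Finset.mul_sum, Int.cast_sum]
    ring
  refine ⟨fun x => (⌊a * x⌋ : ZMod N), fun u j => ⟨?_, ?_⟩⟩
  · obtain ⟨k, hk, hkj⟩ := exists_floor_add_zmod_eq hstep htotal (a * u) j
    refine ⟨_, mem_image_of_mem _ hk, ?_⟩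
    simp only [mul_add, hs]
    rw [← add_assoc, floor_add_natCast_mul_zmod, hkj]
  · obtain ⟨k, hk, hkj⟩ := exists_floor_sub_zmod_eq hstep htotal (a * u) j
    refine ⟨_, mem_image_of_mem _ hk, ?_⟩
    simp only [mul_sub, hs]
    rw [← sub_sub, sub_eq_add_neg _ ((N : ℝ) * _), ← mul_neg, ← Int.cast_neg,
      floor_add_natCast_mul_zmod, hkj]

lemma exists_coord_eq_add_or_eq_sub {ι : Type*} [Fintype ι] {M : Set ℝ} {a b : ℝ} (hab : a < b)
    (ha : a ∈ M) (hb : b ∈ M) (hM : M ⊆ Icc a b) {f : ℝ → ι → ℝ}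
    (hf : ∀ x ∈ M, ∀ y ∈ M, dist (f x) (f y) = dist x y) :
    ∃ d u, (∀ x ∈ M, f x d = u + x) ∨ ∀ x ∈ M, f x d = u - x := by
  obtain ⟨d, hd⟩ : ∃ d, b - a ≤ |f b d - f a d| := by
    by_contra! hlt
    have : dist (f b) (f a) < b - a := (dist_pi_lt_iff (sub_pos.2 hab)).2 hlt
    rw [hf b hb a ha, Real.dist_eq, abs_of_pos (sub_pos.2 hab)] at this
    exact this.false
  have hcoord {x y : ℝ} (hx : x ∈ M) (hy : y ∈ M) (hxy : x ≤ y) : |f y d - f x d| ≤ y - x := by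
    rw [← abs_of_nonneg (sub_nonneg.2 hxy), ← Real.dist_eq y x, ← hf y hy x hx]
    exact dist_le_pi_dist (f y) (f x) d
  have hleft (x : ℝ) (hx : x ∈ M) := abs_le.1 (hcoord ha hx (hM hx).1)
  have hright (x : ℝ) (hx : x ∈ M) := abs_le.1 (hcoord hx hb (hM hx).2)
  rcases le_abs'.1 hd with h | h
  · refine ⟨d, f a d + a, .inr fun x hx => ?_⟩
    linarith [(hleft x hx).1, (hright x hx).1]
  · refine ⟨d, f a d - a, .inl fun x hx => ?_⟩
    linarith [(hleft x hx).2, (hright x hx).2]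

lemma IsPolychromatic.exists_coloring_forall_not_hasCopy {ι κ : Type*} [Fintype ι] [Fintype κ]
    (hcard : Fintype.card ι < Fintype.card κ) {T : ℝ → κ} {M : Set ℝ} (hT : IsPolychromatic T M)
    {a b : ℝ} (hab : a < b) (ha : a ∈ M) (hb : b ∈ M) (hM : M ⊆ Icc a b) :
    ∃ c : (ι → ℝ) → κ, ∀ j, ¬ HasCopy M {x | c x = j} := by
  have hmissed (x : ι → ℝ) : ∃ j, ∀ d, T (x d) ≠ j := by
    by_contra! hsurj
    exact hcard.not_ge (Fintype.card_le_of_surjective (fun d => T (x d)) hsurj)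
  choose c hc using hmissed
  refine ⟨c, fun j ⟨f, hf, hfj⟩ => ?_⟩
  rw [image_subset_iff] at hfj
  obtain ⟨d, u, hadd | hsub⟩ := exists_coord_eq_add_or_eq_sub hab ha hb hM hf
  · obtain ⟨x, hx, hxj⟩ := (hT u j).1
    exact hc (f x) d (by rw [hadd x hx, hxj, hfj hx])
  · obtain ⟨x, hx, hxj⟩ := (hT u j).2
    exact hc (f x) d (by rw [hsub x hx, hxj, hfj hx])

lemma IsLacunary.exists_coloring_forall_not_hasCopy {q : ℝ} {δ : ℕ → ℝ} (hδ : IsLacunary q δ)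
    {ι : Type*} [Fintype ι] (N : ℕ) [NeZero N] (hιN : Fintype.card ι < N)
    (hNq : 2 * ((N : ℝ) + 1) * q ≤ 1) :
    ∃ c : (ι → ℝ) → ZMod N, ∀ j,
      ¬ HasCopy (range fun k => ∑ i ∈ Finset.range k, δ i) {x | c x = j} := by
  obtain ⟨T, hT⟩ := hδ.exists_isPolychromatic N hNq
  have hmono : StrictMono fun k => ∑ i ∈ Finset.range k, δ i :=
    strictMono_nat_of_lt_succ fun k => by
      simpa only [Finset.sum_range_succ, lt_add_iff_pos_right] using hδ.pos k
  have hK : 0 < 2 * N := mul_pos two_pos (NeZero.pos N)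
  obtain ⟨c, hc⟩ := hT.exists_coloring_forall_not_hasCopy (ι := ι) (by rwa [ZMod.card])
    (hmono hK) (mem_image_of_mem _ hK.le) (mem_image_of_mem _ self_mem_Iic)
    (image_subset_iff.2 fun k hk => ⟨hmono.monotone k.zero_le, hmono.monotone hk⟩)
  exact ⟨c, fun j h => hc j ((hasCopy_of_subset (image_subset_range _ _)).trans h)⟩

section Faces

variable {ι : Type*}

/-- The face in direction `-d` of the cube of radius `ρ` around `w`, trimmed by `η * ρ` along its
boundary, so that points of faces of very different radii are farthest apart in direction `d`. -/
def face (η ρ : ℝ) (w : ι → ℝ) (d : ι) : Set (ι → ℝ) :=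
  {x | x d = w d - ρ ∧ ∀ l ≠ d, |x l - w l| ≤ (1 - η) * ρ}

lemma dist_eq_of_mem_face [Fintype ι] {η ρ σ : ℝ} {w x y : ι → ℝ} {d : ι} (hση : σ ≤ ρ)
    (hgap : 2 * σ ≤ η * (ρ + σ)) (hx : x ∈ face η ρ w d) (hy : y ∈ face η σ w d) :
    dist x y = dist ρ σ := by
  have hd : dist (x d) (y d) = dist ρ σ := by
    rw [hx.1, hy.1, dist_sub_left]
  refine le_antisymm ((dist_pi_le_iff dist_nonneg).2 fun l => ?_) (hd ▸ dist_le_pi_dist x y d)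
  by_cases hl : l = d
  · rw [hl, hd]
  · calc dist (x l) (y l) ≤ dist (x l) (w l) + dist (y l) (w l) := dist_triangle_right _ _ _
      _ ≤ (1 - η) * ρ + (1 - η) * σ := add_le_add (hx.2 l hl) (hy.2 l hl)
      _ ≤ ρ - σ := by linarith
      _ = dist ρ σ := by rw [Real.dist_eq, abs_of_nonneg (sub_nonneg.2 hση)]

lemma IsLacunary.hasCopy_of_forall_mem_face [Fintype ι] {q η : ℝ} {r : ℕ → ℝ}
    (hr : IsLacunary q r) (hq : q ≤ 1) (hqη : 2 * q ≤ η) {w : ι → ℝ} {d : ι} {x : ℕ → ι → ℝ}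
    (hx : ∀ k, x k ∈ face η (r k) w d) {A : Set (ι → ℝ)} (hA : ∀ k, x k ∈ A) :
    HasCopy (range r) A := by
  have hη : 0 ≤ η := by linarith [hr.ratio_pos]
  have hdist {i j : ℕ} (hij : i < j) : dist (x i) (x j) = dist (r i) (r j) := by
    refine dist_eq_of_mem_face (hr.antitone hq hij.le) ?_ (hx i) (hx j)
    calc 2 * r j ≤ 2 * (q * r i) := by gcongr; exact hr.le_mul_of_lt hq hij
      _ = 2 * q * r i := by ring
      _ ≤ η * r i := mul_le_mul_of_nonneg_right hqη (hr.pos i).le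
      _ ≤ η * (r i + r j) := by gcongr; linarith [hr.pos j]
  refine hasCopy_range (fun i j => ?_) hA
  rcases lt_trichotomy i j with h | rfl | h
  · exact hdist h
  · rw [dist_self, dist_self]
  · rw [dist_comm, hdist h, dist_comm]

/-- The points `x` of the box `u + [-a, b]^ι` that differ from `u` only in the coordinates
in `S`, the directions still to be dealt with in the construction of a common point of faces. -/
def sliceBox (S : Finset ι) (u : ι → ℝ) (a b : ℝ) : Set (ι → ℝ) :=
  {x | (∀ l ∉ S, x l = u l) ∧ ∀ l, x l - u l ∈ Icc (-a) b}

lemma self_mem_sliceBox {S : Finset ι} {u : ι → ℝ} {a b : ℝ} (ha : 0 ≤ a) (hb : 0 ≤ b) :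
    u ∈ sliceBox S u a b :=
  ⟨fun _ _ => rfl, fun l => by rw [sub_self]; exact ⟨neg_nonpos.2 ha, hb⟩⟩

lemma sliceBox_mono {S S' : Finset ι} (hS : S ⊆ S') {u : ι → ℝ} {a a' b b' : ℝ} (ha : a ≤ a')
    (hb : b ≤ b') : sliceBox S u a b ⊆ sliceBox S' u a' b' :=
  fun _ hx => ⟨fun l hl => hx.1 l fun h => hl (hS h),
    fun l => Icc_subset_Icc (neg_le_neg ha) hb (hx.2 l)⟩

lemma mem_sliceBox_trans {S : Finset ι} {u v x : ι → ℝ} {a a' b b' : ℝ}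
    (hx : x ∈ sliceBox S v a b) (hv : v ∈ sliceBox S u a' b') :
    x ∈ sliceBox S u (a + a') (b + b') := by
  refine ⟨fun l hl => (hx.1 l hl).trans (hv.1 l hl), fun l => ?_⟩
  have hxl := hx.2 l
  have hvl := hv.2 l
  constructor <;> linarith [hxl.1, hxl.2, hvl.1, hvl.2]

lemma IsLacunary.exists_local_max {q : ℝ} {r : ℕ → ℝ} (hr : IsLacunary q r) (hq : q ≤ 1)
    (level : ι → (ι → ℝ) → ℕ) {S : Finset ι} (hS : S.Nonempty) {A : ℝ} (hA : 0 ≤ A)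
    (hAq : A * q ≤ 1) {u : ι → ℝ} {ρ : ℝ} (hρ : 0 ≤ ρ)
    (hlevel : ∀ w ∈ sliceBox S u (A * ρ) (A * ρ), ∀ d ∈ S, r (level d w) ≤ ρ) :
    ∃ w, ∃ d ∈ S, r (level d w) ≤ ρ ∧
      w ∈ sliceBox S u (A * q * r (level d w)) (A * q * r (level d w)) ∧
      ∀ w' ∈ sliceBox S w ((A - 1) * r (level d w)) ((A - 1) * r (level d w)), ∀ d' ∈ S,
        r (level d' w') ≤ r (level d w) := by
  obtain ⟨d₀, hd₀⟩ := hS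
  have hAρ : 0 ≤ A * ρ := mul_nonneg hA hρ
  have hAqr : 0 ≤ A * q * r (level d₀ u) :=
    mul_nonneg (mul_nonneg hA hr.ratio_pos.le) (hr.pos _).le
  -- A smaller level comes with a radius larger by the factor `1 / q`, so a point of smaller level
  -- near `w` would satisfy the same conditions as `w`.
  obtain ⟨⟨d, w⟩, ⟨hd, hwρ, hw⟩, hmin⟩ := exists_minimalFor_of_wellFoundedLT
    (fun p : ι × (ι → ℝ) => p.1 ∈ S ∧ r (level p.1 p.2) ≤ ρ ∧
      p.2 ∈ sliceBox S u (A * q * r (level p.1 p.2)) (A * q * r (level p.1 p.2)))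
    (fun p => level p.1 p.2)
    ⟨(d₀, u), hd₀, hlevel u (self_mem_sliceBox hAρ hAρ) d₀ hd₀, self_mem_sliceBox hAqr hAqr⟩
  refine ⟨w, d, hd, hwρ, hw, fun w' hw' d' hd' => hr.antitone hq ?_⟩
  by_contra! hlt
  have hAqr_le : A * q * r (level d w) ≤ r (level d w) :=
    mul_le_of_le_one_left (hr.pos _).le hAq
  have hw'u : w' ∈ sliceBox S u (A * r (level d w)) (A * r (level d w)) :=
    sliceBox_mono subset_rfl (by linarith) (by linarith) (mem_sliceBox_trans hw' hw)
  have hw'ρ : r (level d' w') ≤ ρ :=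
    hlevel w' (sliceBox_mono subset_rfl (by gcongr) (by gcongr) hw'u) d' hd'
  have hradius : A * r (level d w) ≤ A * q * r (level d' w') := by
    rw [mul_assoc]
    exact mul_le_mul_of_nonneg_left (hr.le_mul_of_lt hq hlt) hA
  exact hlt.not_ge (hmin (j := (d', w'))
    ⟨hd', hw'ρ, sliceBox_mono subset_rfl hradius hradius hw'u⟩ hlt.le)

lemma exists_sliceBox_erase_subset_face_inter [DecidableEq ι] {S : Finset ι} {d : ι} (hd : d ∈ S)
    {η b ρ : ℝ} (hη : 0 ≤ η) (hb : 0 ≤ b) (hbη : b + 3 * η ≤ 1) (hρ : 0 ≤ ρ) (w : ι → ℝ) :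
    ∃ v ∈ sliceBox S w ρ ρ, sliceBox (S.erase d) v ((1 + η) * ρ) (b * ρ) ⊆
      face η ρ w d ∩ sliceBox S w ρ ((b + 2 * η) * ρ) := by
  let v : ι → ℝ := fun l => if l = d then w d - ρ else if l ∈ S then w l + 2 * η * ρ else w l
  have hvd : v d = w d - ρ := by simp [v]
  have hvS (l : ι) (hl : l ∈ S) (hld : l ≠ d) : v l = w l + 2 * η * ρ := by simp [v, hl, hld]
  have hv_out (l : ι) (hl : l ∉ S) : v l = w l := by
    simp [v, hl, (ne_of_mem_of_not_mem hd hl).symm]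
  have hηρ : 0 ≤ η * ρ := mul_nonneg hη hρ
  have hbρ : 0 ≤ b * ρ := mul_nonneg hb hρ
  have hbηρ : (b + 3 * η) * ρ ≤ ρ := mul_le_of_le_one_left hρ hbη
  refine ⟨v, ⟨hv_out, fun l => ?_⟩, fun x hx => ?_⟩
  · by_cases hl : l ∈ S
    · obtain rfl | hld := eq_or_ne l d
      · rw [hvd]; constructor <;> linarith
      · rw [hvS l hl hld]; constructor <;> linarith
    · rw [hv_out l hl]; constructor <;> linarith
  · have hxd : x d = w d - ρ := (hx.1 d (Finset.notMem_erase d S)).trans hvd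
    have hx_out (l : ι) (hl : l ∉ S) : x l = w l :=
      (hx.1 l fun h => hl (Finset.mem_of_mem_erase h)).trans (hv_out l hl)
    have hx_other (l : ι) (hld : l ≠ d) :
        x l - w l ∈ Icc (-((1 - η) * ρ)) ((b + 2 * η) * ρ) := by
      by_cases hl : l ∈ S
      · have := hx.2 l
        rw [hvS l hl hld] at this
        constructor <;> linarith [this.1, this.2]
      · rw [hx_out l hl]; constructor <;> linarith
    refine ⟨⟨hxd, fun l hld => abs_le.2 ⟨(hx_other l hld).1, ?_⟩⟩, hx_out, fun l => ?_⟩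
    · linarith [(hx_other l hld).2]
    · obtain rfl | hld := eq_or_ne l d
      · rw [hxd]; constructor <;> linarith
      · exact ⟨by linarith [(hx_other l hld).1], (hx_other l hld).2⟩

lemma IsLacunary.exists_reduction_to_erase [DecidableEq ι] {q η : ℝ} {r : ℕ → ℝ}
    (hr : IsLacunary q r) (level : ι → (ι → ℝ) → ℕ) {S : Finset ι} (hS : S.Nonempty)
    (hSq : 2 * S.card * q ≤ η) (hSη : 3 * S.card * η ≤ 1) {u : ι → ℝ} {ρ : ℝ} (hρ : 0 ≤ ρ)
    (hlevel : ∀ w ∈ sliceBox S u (2 * S.card * ρ) (2 * S.card * ρ), ∀ d ∈ S,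
      r (level d w) ≤ ρ) :
    ∃ d ∈ S, ∃ w v σ, σ = r (level d w) ∧
      (∀ w' ∈ sliceBox (S.erase d) v (2 * (S.erase d).card * σ) (2 * (S.erase d).card * σ),
        ∀ d' ∈ S.erase d, r (level d' w') ≤ σ) ∧
      sliceBox (S.erase d) v ((1 + η) * σ) (3 * (S.erase d).card * η * σ) ⊆
        face η σ w d ∩ sliceBox S u ((1 + η) * ρ) (3 * S.card * η * ρ) := by
  have hcard : (1 : ℝ) ≤ S.card := Nat.one_le_cast.2 hS.card_pos
  have hη : 0 ≤ η := (mul_nonneg (by positivity) hr.ratio_pos.le).trans hSq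
  have hη1 : η ≤ 1 := by nlinarith
  have hq : q ≤ 1 := by nlinarith [hr.ratio_pos]
  obtain ⟨w, d, hd, hσρ, hwu, hmax⟩ :=
    hr.exists_local_max hq level hS (by positivity) (hSq.trans hη1) hρ hlevel
  have hcard_erase : ((S.erase d).card : ℝ) = S.card - 1 := Finset.cast_card_erase_of_mem hd
  set σ := r (level d w) with hσ_def
  have hσ : 0 ≤ σ := (hr.pos _).le
  obtain ⟨v, hvw, hv⟩ := exists_sliceBox_erase_subset_face_inter hd hη
    (b := 3 * (S.erase d).card * η) (by positivity) (by rw [hcard_erase]; linarith) hσ w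
  refine ⟨d, hd, w, v, σ, hσ_def, fun w' hw' d' hd' => ?_, fun x hx => ⟨(hv hx).1, ?_⟩⟩
  · refine hmax w' ?_ d' (Finset.mem_of_mem_erase hd')
    have hw'w := mem_sliceBox_trans (sliceBox_mono (S.erase_subset d) le_rfl le_rfl hw') hvw
    rw [hcard_erase] at hw'w
    exact sliceBox_mono subset_rfl (by linarith) (by linarith) hw'w
  · have hSqσ : 2 * S.card * q * σ ≤ η * σ := mul_le_mul_of_nonneg_right hSq hσ
    refine sliceBox_mono subset_rfl ?_ ?_ (mem_sliceBox_trans (hv hx).2 hwu)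
    · calc σ + 2 * S.card * q * σ ≤ (1 + η) * σ := by linarith
        _ ≤ (1 + η) * ρ := by gcongr
    · calc (3 * (S.erase d).card * η + 2 * η) * σ + 2 * S.card * q * σ
          ≤ 3 * S.card * η * σ := by rw [hcard_erase]; linarith
        _ ≤ 3 * S.card * η * ρ := by gcongr

lemma IsLacunary.exists_mem_sliceBox_forall_mem_face {q η : ℝ} {r : ℕ → ℝ}
    (hr : IsLacunary q r) (level : ι → (ι → ℝ) → ℕ) (S : Finset ι)
    (hSq : 2 * S.card * q ≤ η) (hSη : 3 * S.card * η ≤ 1) (u : ι → ℝ) {ρ : ℝ} (hρ : 0 ≤ ρ)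
    (hlevel : ∀ w ∈ sliceBox S u (2 * S.card * ρ) (2 * S.card * ρ), ∀ d ∈ S,
      r (level d w) ≤ ρ) :
    ∃ x ∈ sliceBox S u ((1 + η) * ρ) (3 * S.card * η * ρ),
      ∀ d ∈ S, ∃ w, x ∈ face η (r (level d w)) w d := by
  classical
  induction S using Finset.strongInduction generalizing u ρ with | H S ih
  have hq : 0 ≤ q := hr.ratio_pos.le
  have hη : 0 ≤ η := le_trans (by positivity) hSq
  obtain rfl | hS := S.eq_empty_or_nonempty
  · exact ⟨u, self_mem_sliceBox (by positivity) (by simp), by simp⟩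
  obtain ⟨d, hd, w, v, σ, rfl, hlevel_v, hv⟩ :=
    hr.exists_reduction_to_erase level hS hSq hSη hρ hlevel
  have hcard_le : ((S.erase d).card : ℝ) ≤ S.card := Nat.cast_le.2 Finset.card_erase_le
  obtain ⟨x, hxv, hxface⟩ := ih (S.erase d) (Finset.erase_ssubset hd)
    (le_trans (by gcongr) hSq) (le_trans (by gcongr) hSη) v (hr.pos _).le hlevel_v
  refine ⟨x, (hv hxv).2, fun d' hd' => ?_⟩
  obtain rfl | hne := eq_or_ne d' d
  · exact ⟨w, (hv hxv).1⟩
  · exact hxface d' (Finset.mem_erase.2 ⟨hne, hd'⟩)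

end Faces

lemma IsLacunary.exists_forall_mem_face {ι : Type*} [Fintype ι] {q η : ℝ} {r : ℕ → ℝ}
    (hr : IsLacunary q r) (hιq : 2 * Fintype.card ι * q ≤ η) (hιη : 3 * Fintype.card ι * η ≤ 1)
    (hq : q ≤ 1) (level : ι → (ι → ℝ) → ℕ) :
    ∃ x, ∀ d, ∃ w, x ∈ face η (r (level d w)) w d := by
  obtain ⟨x, -, hx⟩ := hr.exists_mem_sliceBox_forall_mem_face level Finset.univ hιq hιη 0
    (hr.pos 0).le fun w _ d _ => hr.antitone hq (level d w).zero_le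
  exact ⟨x, fun d => hx d (Finset.mem_univ d)⟩

theorem IsLacunary.exists_hasCopy_range {ι : Type*} [Fintype ι] {q : ℝ} {r : ℕ → ℝ}
    (hr : IsLacunary q r) (hιq : 6 * (Fintype.card ι : ℝ) ^ 2 * q ≤ 1) (c : (ι → ℝ) → ι) :
    ∃ d, HasCopy (range r) {x | c x = d} := by
  have : Nonempty ι := ⟨c 0⟩
  have hcard : (1 : ℝ) ≤ Fintype.card ι := Nat.one_le_cast.2 Fintype.card_pos
  set η : ℝ := 1 / (3 * Fintype.card ι)
  have hcard_η : 3 * Fintype.card ι * η = 1 := mul_one_div_cancel (by positivity)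
  have hcard_q : 2 * Fintype.card ι * q ≤ η := by
    rw [le_div_iff₀ (by positivity)]
    linarith
  have hq := hr.ratio_pos
  have hqη : 2 * q ≤ η := by
    refine le_trans ?_ hcard_q
    gcongr
    linarith
  have hη : η ≤ 1 := by
    rw [div_le_one (by positivity)]
    linarith
  by_contra! hno
  have havoid (d : ι) (w : ι → ℝ) : ∃ k, ∀ x ∈ face η (r k) w d, c x ≠ d := by
    by_contra! hmeet
    choose x hx hxd using hmeet
    exact hno d (hr.hasCopy_of_forall_mem_face (by linarith) hqη hx hxd)
  choose level hlevel using havoid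
  obtain ⟨x, hx⟩ := hr.exists_forall_mem_face hcard_q hcard_η.le (by linarith) level
  obtain ⟨w, hxw⟩ := hx (c x)
  exact hlevel _ w x hxw rfl

lemma hasCopy_range_sum_range_tsum {E : Type*} [NormedAddCommGroup E] {δ : ℕ → E}
    (hδ : Summable δ) :
    HasCopy (range fun k => ∑ i ∈ Finset.range k, δ i) (range fun k => ∑' i, δ (i + k)) := by
  refine hasCopy_range (x := fun k => ∑' i, δ (i + k)) (fun j k => ?_) mem_range_self
  rw [← dist_sub_left (∑' i, δ i) (∑ i ∈ Finset.range j, δ i), ← hδ.sum_add_tsum_nat_add j,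
    add_sub_cancel_left, hδ.sum_add_tsum_nat_add j, ← hδ.sum_add_tsum_nat_add k,
    add_sub_cancel_left]

theorem chi_geom_eq_general {n : ℕ} {δ : ℕ → ℝ} (hδ : IsLacunary (1 / (6 * ((n : ℝ) + 1) ^ 2)) δ) :
    (∃ c : (Fin n → ℝ) → Fin (n + 1), ∀ i,
        ¬ HasCopy (range fun m => ∑ j ∈ Finset.range m, δ j) {x | c x = i}) ∧
      ∀ c : (Fin n → ℝ) → Fin n, ∃ i,
        HasCopy (range fun m => ∑ j ∈ Finset.range m, δ j) {x | c x = i} := by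
  have hn : (0 : ℝ) ≤ n := n.cast_nonneg
  refine ⟨hδ.exists_coloring_forall_not_hasCopy (n + 1) (by simp) ?_, fun c => ?_⟩
  · rw [mul_one_div, div_le_one (by positivity)]
    push_cast
    nlinarith [hn]
  · have hlt : 1 / (6 * ((n : ℝ) + 1) ^ 2) < 1 := by
      rw [div_lt_one (by positivity)]
      nlinarith [hn]
    obtain ⟨i, hi⟩ := (hδ.tail hlt).exists_hasCopy_range (by
      rw [Fintype.card_fin, mul_one_div, div_le_one (by positivity)]
      gcongr
      linarith) c
    exact ⟨i, (hasCopy_range_sum_range_tsum (hδ.summable hlt)).trans hi⟩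

/-- For every `n` there is `q₀ > 0` such that for all `0 < q ≤ q₀` one has
`χ(ℝ^n_∞, G(q)) = n+1`: some `(n+1)`-colouring of `ℝ^n` has no monochromatic
isometric copy of `G(q)`, while every `n`-colouring has one. -/
theorem chi_geom_eq (n : ℕ) :
    ∃ q0 : ℝ, 0 < q0 ∧ ∀ q : ℝ, 0 < q → q ≤ q0 →
      (∃ c : (Fin n → ℝ) → Fin (n + 1), ∀ i : Fin (n + 1),
          ¬ HasCopy (geomSet q) {x | c x = i}) ∧
      (∀ c : (Fin n → ℝ) → Fin n, ∃ i : Fin n, HasCopy (geomSet q) {x | c x = i}) :=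
  ⟨1 / (6 * ((n : ℝ) + 1) ^ 2), by positivity, fun _ hq hq0 =>
    chi_geom_eq_general (isLacunary_pow hq hq0)⟩
end

section
/- There exists q_0 > 0 such that for every 0 < q ≤ q_0 and every n ∈ ℕ, χ(ℝ^n_∞, G(q)) > log_3 n; that is, for every colouring of ℝ^n with at most log_3 n colours, some colour class contains an isometric copy of G(q). -/
open Set Filter

/-!
Lay a copy of `G(q)` out along a coordinate `k`: the `l`-th point has `k`-th coordinate
`z k - tailSum q l`, and the other coordinates only have to move by at most `q ^ l` in the next
step. For all colours and all directions of a set `J` at once, look for such points in slices around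
a common centre `z`, at smaller and smaller scales. If every colour is found in every slice, then
the points found form a copy.

Otherwise, at some scale a colour `c` misses the slice in a direction `k`. Moving `z` into this
slice loses `c`, and the search can be resumed with one colour less in a third of the directions,
unless for one of these directions `k'` another colour `d` misses a wider slice, one allowing for
the change of centre. Moving into that slice instead confines the directions not yet used to a cube
without `d`; a cube there around the old values of a fresh block of directions again offers a place
to resume the search with one colour less. Each failure of this kind excludes a further colour, so
some attempt succeeds, and the geometric series `3 ^ m + 3 ^ (m - 1) + ⋯` bounds the number of
directions consumed.
-/

lemma hasCopy_range_of_dist_eq {ι' α β : Type*} [Nonempty ι'] [MetricSpace α] [MetricSpace β]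
    {u : ι' → α} {v : ι' → β} {A : Set β} (hdist : ∀ i j, dist (v i) (v j) = dist (u i) (u j))
    (hv : ∀ i, v i ∈ A) : HasCopy (range u) A := by
  refine ⟨v ∘ Function.invFun u, ?_, ?_⟩
  · rintro _ ⟨i, rfl⟩ _ ⟨j, rfl⟩
    simp only [Function.comp_apply, hdist, Function.invFun_eq (mem_range_self (f := u) _)]
  · rintro _ ⟨t, -, rfl⟩
    exact hv _

lemma dist_eq_dist_of_lipschitzWith_one {X : Type*} [PseudoMetricSpace X] {φ : X → ℝ}
    (hφ : LipschitzWith 1 φ) {x : ℕ → X}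
    (hx : ∀ i, dist (x i) (x (i + 1)) ≤ φ (x (i + 1)) - φ (x i)) (i j : ℕ) :
    dist (x i) (x j) = dist (φ (x i)) (φ (x j)) := by
  wlog hij : i ≤ j generalizing i j
  · rw [dist_comm, this j i (le_of_not_ge hij), dist_comm]
  refine le_antisymm ?_ (by simpa using (hφ.dist_le_mul (x i) (x j)))
  calc dist (x i) (x j) ≤ ∑ m ∈ Finset.Ico i j, (φ (x (m + 1)) - φ (x m)) :=
        dist_le_Ico_sum_of_dist_le hij fun _ _ => hx _
    _ = φ (x j) - φ (x i) := Finset.sum_Ico_sub (fun m => φ (x m)) hij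
    _ ≤ dist (φ (x i)) (φ (x j)) := by
        rw [dist_comm]
        exact le_abs_self _

/-- The sum `q ^ i + q ^ (i + 1) + ⋯`, i.e. the distance from the `i`-th point of `G(q)` to the
limit of `G(q)`. -/
noncomputable def tailSum (q : ℝ) (i : ℕ) : ℝ := q ^ i / (1 - q)

lemma tailSum_sub_tailSum_succ {q : ℝ} (hq : q ≠ 1) (i : ℕ) :
    tailSum q i - tailSum q (i + 1) = q ^ i := by
  have : 1 - q ≠ 0 := sub_ne_zero.mpr hq.symm
  unfold tailSum
  field_simp
  ring

lemma tailSum_nonneg {q : ℝ} (hq₀ : 0 ≤ q) (hq₁ : q ≤ 1) (i : ℕ) : 0 ≤ tailSum q i :=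
  div_nonneg (pow_nonneg hq₀ i) (sub_nonneg.mpr hq₁)

lemma tailSum_le {q : ℝ} (hq₀ : 0 ≤ q) (hq : q ≤ 1 / 3) (i : ℕ) :
    tailSum q i ≤ 3 / 2 * q ^ i := by
  rw [tailSum, div_le_iff₀ (by linarith)]
  nlinarith [pow_nonneg hq₀ i]

section Boxes

variable {ι : Type*} {z z' b w w' y : ι → ℝ} {k : ι} {t s : ℝ}

/-- The closed box centred at `z` whose side in direction `j` has half-length `w j`. -/
def coordBox (z w : ι → ℝ) : Set (ι → ℝ) := {y | ∀ j, |y j - z j| ≤ w j}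

/-- The part of the hyperplane `y k = z k - t` lying over `coordBox z w`: the width `w k` is
ignored. -/
def coordSlice (z w : ι → ℝ) (k : ι) (t : ℝ) : Set (ι → ℝ) :=
  {y | y k = z k - t ∧ ∀ j ≠ k, |y j - z j| ≤ w j}

lemma coordBox_subset_coordBox (h : ∀ j, |b j - z j| + w j ≤ w' j) :
    coordBox b w ⊆ coordBox z w' := fun y hy j =>
  calc |y j - z j| ≤ |y j - b j| + |b j - z j| := abs_sub_le _ _ _
    _ ≤ w' j := by linarith [hy j, h j]

lemma coordSlice_subset_coordSlice (hk : b k = z k) (h : ∀ j ≠ k, |b j - z j| + w j ≤ w' j) :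
    coordSlice b w k t ⊆ coordSlice z w' k t := fun y hy =>
  ⟨hk ▸ hy.1, fun j hj =>
    calc |y j - z j| ≤ |y j - b j| + |b j - z j| := abs_sub_le _ _ _
      _ ≤ w' j := by linarith [hy.2 j hj, h j hj]⟩

variable [DecidableEq ι] {J R B : Finset ι}

/-- The half-lengths of a cube of half-side `s` in the directions of `J`, degenerate in the
others. -/
def cubeWidth (J : Finset ι) (s : ℝ) : ι → ℝ := fun j => if j ∈ J then s else 0

lemma cubeWidth_of_mem {j : ι} (hj : j ∈ J) : cubeWidth J s j = s := if_pos hj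

lemma cubeWidth_of_notMem {j : ι} (hj : j ∉ J) : cubeWidth J s j = 0 := if_neg hj

lemma cubeWidth_le (hst : s ≤ t) (j : ι) : cubeWidth J s j ≤ cubeWidth J t j := by
  unfold cubeWidth
  split_ifs <;> simp [hst]

lemma cubeWidth_nonneg (hs : 0 ≤ s) (j : ι) : 0 ≤ cubeWidth J s j := by
  unfold cubeWidth
  split_ifs <;> simp [hs]

lemma cubeWidth_mono (hRJ : R ⊆ J) (hs : 0 ≤ s) : cubeWidth R s ≤ cubeWidth J s := fun j => by
  by_cases hR : j ∈ R
  · rw [cubeWidth_of_mem hR, cubeWidth_of_mem (hRJ hR)]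
  · rw [cubeWidth_of_notMem hR]
    exact cubeWidth_nonneg hs j

/-- `b` arises from `z` by moving some coordinates in `J` by at most `3 s / 2`, those in the set
`R ⊆ J` of reserve directions being moved by exactly `-s / 2`. In the cube of half-side `s` around
`b` a reserve coordinate can then still be set to `z j - r` for any `0 ≤ r ≤ 3 s / 2`, and can be
restored to `z j` with room `s / 2` to spare. -/
structure ReserveShift (s : ℝ) (J R : Finset ι) (z b : ι → ℝ) : Prop where
  subset : R ⊆ J
  eq_sub : ∀ j ∈ R, b j = z j - s / 2
  abs_sub_le : ∀ j, |b j - z j| ≤ cubeWidth J (3 / 2 * s) j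

namespace ReserveShift

lemma piecewise_sub_half (hs : 0 ≤ s) :
    ReserveShift s J J z (J.piecewise (fun j => z j - s / 2) z) where
  subset := subset_rfl
  eq_sub j hj := J.piecewise_eq_of_mem _ _ hj
  abs_sub_le j := by
    by_cases hj : j ∈ J
    · rw [J.piecewise_eq_of_mem _ _ hj, cubeWidth_of_mem hj, abs_le]
      constructor <;> linarith
    · simp [cubeWidth_of_notMem, hj]

variable {R' : Finset ι} {r : ℝ}

lemma update (h : ReserveShift s J R z b) (hR' : R' ⊆ R) (hkJ : k ∈ J) (hkR' : k ∉ R')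
    (hr₀ : 0 ≤ r) (hr : r ≤ 3 / 2 * s) :
    ReserveShift s J R' z (Function.update b k (z k - r)) where
  subset := hR'.trans h.subset
  eq_sub j hj := by
    rw [Function.update_of_ne (ne_of_mem_of_not_mem hj hkR'), h.eq_sub j (hR' hj)]
  abs_sub_le j := by
    rcases eq_or_ne j k with rfl | hjk
    · rw [Function.update_self, cubeWidth_of_mem hkJ, sub_sub_cancel_left, abs_neg,
        abs_of_nonneg hr₀]
      exact hr
    · rw [Function.update_of_ne hjk]
      exact h.abs_sub_le j

lemma coordBox_subset (h : ReserveShift s J R z b) (hs : 0 ≤ s) :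
    coordBox b (cubeWidth R s) ⊆ coordBox z (cubeWidth J (5 / 2 * s)) := by
  refine coordBox_subset_coordBox fun j => ?_
  have hb := h.abs_sub_le j
  have hRJ := cubeWidth_mono h.subset hs j
  by_cases hj : j ∈ J
  · simp only [cubeWidth_of_mem hj] at *
    linarith
  · simp only [cubeWidth_of_notMem hj] at *
    linarith

lemma abs_piecewise_sub_le (h : ReserveShift s J R z b) (j : ι) :
    |B.piecewise z b j - z j| ≤ cubeWidth J (3 / 2 * s) j := by
  by_cases hj : j ∈ B
  · rw [B.piecewise_eq_of_mem _ _ hj, sub_self, abs_zero]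
    exact (abs_nonneg _).trans (h.abs_sub_le j)
  · rw [B.piecewise_eq_of_notMem _ _ hj]
    exact h.abs_sub_le j

lemma coordBox_piecewise_subset (h : ReserveShift s J R z b) (hBR : B ⊆ R) (hs : 0 ≤ s) :
    coordBox (B.piecewise z b) (cubeWidth B (s / 2)) ⊆ coordBox b (cubeWidth R s) := by
  refine coordBox_subset_coordBox fun j => ?_
  by_cases hj : j ∈ B
  · rw [B.piecewise_eq_of_mem _ _ hj, h.eq_sub j (hBR hj), sub_sub_cancel, cubeWidth_of_mem hj,
      cubeWidth_of_mem (hBR hj), abs_of_nonneg (by linarith)]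
    linarith
  · rw [B.piecewise_eq_of_notMem _ _ hj, sub_self, abs_zero, zero_add, cubeWidth_of_notMem hj]
    exact cubeWidth_nonneg hs j

lemma coordBox_update_subset (h : ReserveShift s J R z b) (hBR : B ⊆ R) (hk : k ∈ B)
    (hr₀ : 0 ≤ r) (hr : r ≤ 3 / 2 * s) :
    coordBox (Function.update b k (z k - r)) (cubeWidth (R \ B) s) ⊆
      coordBox b (cubeWidth R s) := by
  refine coordBox_subset_coordBox fun j => ?_
  have hs : 0 ≤ s := by linarith
  rcases eq_or_ne j k with rfl | hjk
  · rw [Function.update_self, h.eq_sub j (hBR hk), cubeWidth_of_mem (hBR hk),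
      cubeWidth_of_notMem (by simp [hk]), add_zero, abs_le]
    constructor <;> linarith
  · simpa [hjk] using cubeWidth_mono Finset.sdiff_subset hs j

lemma coordBox_update_subset_coordSlice (h : ReserveShift s J R z b) (hBR : B ⊆ R) (hk : k ∈ B)
    (hs : 0 ≤ s) :
    coordBox (Function.update b k (z k - r)) (cubeWidth (R \ B) s) ⊆
      coordSlice (B.piecewise z b) (B.piecewise (fun _ => s / 2) (cubeWidth J s)) k r := by
  intro y hy
  constructor
  · have hyk := hy k
    rw [cubeWidth_of_notMem (by simp [hk]), Function.update_self, abs_nonpos_iff,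
      sub_eq_zero] at hyk
    rw [hyk, B.piecewise_eq_of_mem _ _ hk]
  · intro j hjk
    have hyj := hy j
    rw [Function.update_of_ne hjk] at hyj
    by_cases hj : j ∈ B
    · rw [cubeWidth_of_notMem (by simp [hj]), h.eq_sub j (hBR hj), abs_nonpos_iff,
        sub_eq_zero] at hyj
      rw [B.piecewise_eq_of_mem _ _ hj, B.piecewise_eq_of_mem _ _ hj, hyj, sub_sub_cancel_left,
        abs_neg, abs_of_nonneg (by linarith)]
    · rw [B.piecewise_eq_of_notMem _ _ hj, B.piecewise_eq_of_notMem _ _ hj]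
      exact hyj.trans (cubeWidth_mono (Finset.sdiff_subset.trans h.subset) hs j)

end ReserveShift

lemma coordBox_piecewise_update_subset_coordSlice {r : ℝ} (hB : B ⊆ J.erase k) (hs : 0 ≤ s) :
    coordBox
        (B.piecewise z (Function.update (J.piecewise (fun j => z j - s / 2) z) k (z k - r)))
        (cubeWidth B (s / 2)) ⊆
      coordSlice z (cubeWidth J (s / 2)) k r := by
  intro y hy
  have hkB : k ∉ B := fun h => Finset.notMem_erase k J (hB h)
  constructor
  · have hyk := hy k
    rwa [cubeWidth_of_notMem hkB, B.piecewise_eq_of_notMem _ _ hkB, Function.update_self,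
      abs_nonpos_iff, sub_eq_zero] at hyk
  · intro j hjk
    have hyj := hy j
    by_cases hjB : j ∈ B
    · have hjJ := Finset.mem_of_mem_erase (hB hjB)
      rw [B.piecewise_eq_of_mem _ _ hjB, cubeWidth_of_mem hjB] at hyj
      rwa [cubeWidth_of_mem hjJ]
    · rw [B.piecewise_eq_of_notMem _ _ hjB, Function.update_of_ne hjk, cubeWidth_of_notMem hjB,
        abs_nonpos_iff, sub_eq_zero] at hyj
      rw [hyj]
      by_cases hjJ : j ∈ J
      · rw [J.piecewise_eq_of_mem _ _ hjJ, cubeWidth_of_mem hjJ, sub_sub_cancel_left, abs_neg,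
          abs_of_nonneg (by linarith)]
      · simp [hjJ, cubeWidth_of_notMem]

end Boxes

section Colouring

variable {ι κ : Type*} [Fintype ι] {q : ℝ} {col : (ι → ℝ) → κ} {c : κ} {k : ι} {l : ℕ}
  {z z' w w' y y' : ι → ℝ} {x : ℕ → ι → ℝ}

/-- `x` moves like a copy of `G(q)` from its `l`-th point on (so `x 0` is the `l`-th point), the
copy being laid out along coordinate `k`, which realises all distances. -/
def IsGeomPath (q : ℝ) (k : ι) (l : ℕ) (x : ℕ → ι → ℝ) : Prop :=
  ∀ i, x (i + 1) k - x i k = q ^ (l + i) ∧ dist (x i) (x (i + 1)) ≤ q ^ (l + i)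

lemma IsGeomPath.hasCopy {A : Set (ι → ℝ)} (hx : IsGeomPath q k 0 x) (hA : ∀ i, x i ∈ A) :
    HasCopy (geomSet q) A := by
  have hcoord : ∀ i, x i k = x 0 k + ∑ m ∈ Finset.range i, q ^ m := fun i => by
    induction i with
    | zero => simp
    | succ i ih =>
      have hstep := (hx i).1
      rw [zero_add] at hstep
      rw [Finset.sum_range_succ, ← add_assoc, ← ih, ← hstep, add_sub_cancel]
  refine hasCopy_range_of_dist_eq (fun i j => ?_) hA
  rw [dist_eq_dist_of_lipschitzWith_one (LipschitzWith.eval k)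
    (fun m => (hx m).2.trans_eq (hx m).1.symm) i j]
  simp only [Function.eval, hcoord i, hcoord j, dist_add_left]

lemma IsGeomPath.cons (hx : IsGeomPath q k (l + 1) x) (hy : x 0 k - y k = q ^ l)
    (hdist : dist y (x 0) ≤ q ^ l) : IsGeomPath q k l (fun i => Nat.casesOn i y x) := by
  rintro (_ | i)
  · exact ⟨hy, hdist⟩
  · have hstep := hx i
    rw [add_right_comm] at hstep
    exact hstep

lemma sub_eq_and_dist_le_of_mem_coordSlice (hq₀ : 0 ≤ q) (hq : q ≠ 1)
    (hy : y ∈ coordSlice z w k (tailSum q l)) (hy' : y' ∈ coordSlice z w' k (tailSum q (l + 1)))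
    (hw : ∀ j ≠ k, w j + w' j ≤ q ^ l) : y' k - y k = q ^ l ∧ dist y y' ≤ q ^ l := by
  have hk : y' k - y k = q ^ l := by
    rw [hy'.1, hy.1, sub_sub_sub_cancel_left, tailSum_sub_tailSum_succ hq]
  refine ⟨hk, (dist_pi_le_iff (pow_nonneg hq₀ l)).mpr fun j => ?_⟩
  rcases eq_or_ne j k with rfl | hj
  · rw [dist_comm, Real.dist_eq, hk, abs_of_nonneg (pow_nonneg hq₀ l)]
  · calc |y j - y' j| ≤ |y j - z j| + |z j - y' j| := abs_sub_le _ _ _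
      _ ≤ w j + w' j := add_le_add (hy.2 j hj) (abs_sub_comm (z j) (y' j) ▸ hy'.2 j hj)
      _ ≤ q ^ l := hw j hj

/-- Any monochromatic end piece of a copy of `G(q)` from the `l`-th point on that starts in the
given slice around `z` can be completed to a full monochromatic copy. -/
def IsExtendable (q : ℝ) (col : (ι → ℝ) → κ) (c : κ) (k : ι) (l : ℕ) (z w : ι → ℝ) : Prop :=
  ∀ x, IsGeomPath q k l x → (∀ i, col (x i) = c) → x 0 ∈ coordSlice z w k (tailSum q l) →
    HasCopy (geomSet q) {y | col y = c}

/-- Colour `c` occurs in the slice around `z` that may contain the `l`-th point of a copy of `G(q)`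
laid out along coordinate `k` with limit value `z k`. -/
def Hits (q : ℝ) (col : (ι → ℝ) → κ) (c : κ) (k : ι) (l : ℕ) (z w : ι → ℝ) : Prop :=
  ∃ y ∈ coordSlice z w k (tailSum q l), col y = c

lemma isExtendable_zero : IsExtendable q col c k 0 z w := fun _ hx hcol _ => hx.hasCopy hcol

lemma IsExtendable.mono (h : IsExtendable q col c k l z w) (hk : z' k = z k)
    (hw : ∀ j ≠ k, |z' j - z j| + w' j ≤ w j) : IsExtendable q col c k l z' w' :=
  fun x hx hcol hx₀ => h x hx hcol (coordSlice_subset_coordSlice hk hw hx₀)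

lemma IsExtendable.succ (hq₀ : 0 ≤ q) (hq : q ≠ 1) (h : IsExtendable q col c k l z w)
    (hhit : Hits q col c k l z w) (hw : ∀ j ≠ k, w j + w' j ≤ q ^ l) :
    IsExtendable q col c k (l + 1) z w' := by
  intro x hx hcol hx₀
  obtain ⟨y, hy, hyc⟩ := hhit
  obtain ⟨hstep, hdist⟩ := sub_eq_and_dist_le_of_mem_coordSlice hq₀ hq hy hx₀ hw
  refine h _ (hx.cons hstep hdist) ?_ hy
  rintro (_ | i)
  exacts [hyc, hcol i]

lemma IsExtendable.hasCopy (hq₀ : 0 ≤ q) (hq : q ≠ 1) {w : ℕ → ι → ℝ}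
    (h : IsExtendable q col c k l z (w 0)) (hhit : ∀ i, Hits q col c k (l + i) z (w i))
    (hw : ∀ i, ∀ j ≠ k, w i j + w (i + 1) j ≤ q ^ (l + i)) :
    HasCopy (geomSet q) {y | col y = c} := by
  choose x hx hcol using hhit
  exact h x (fun i => sub_eq_and_dist_le_of_mem_coordSlice hq₀ hq (hx i) (hx (i + 1)) (hw i)) hcol
    (hx 0)

variable [DecidableEq ι] {C Y : Finset κ} {J B R : Finset ι} {b : ι → ℝ}

/-- A state of the search for a monochromatic copy: only the colours in `C` occur in the cube
around `z` spanned by the directions in `J`, and in each of these colours and directions an end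
piece from the `l`-th point on that starts in this cube is all that is missing for a copy of `G(q)`.
The half-side `5 / 2 * q ^ l` leaves room for a cube of half-side `q ^ l` whose centre is displaced
by `tailSum q l ≤ 3 / 2 * q ^ l`. -/
structure SearchState (q : ℝ) (col : (ι → ℝ) → κ) (C : Finset κ) (l : ℕ) (J : Finset ι)
    (z : ι → ℝ) : Prop where
  card_le : 3 ^ C.card ≤ J.card
  mapsTo : MapsTo col (coordBox z (cubeWidth J (5 / 2 * q ^ l))) C
  isExtendable : ∀ c ∈ C, ∀ k ∈ J, IsExtendable q col c k l z (cubeWidth J (5 / 2 * q ^ l))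

lemma five_halves_mul_pow_succ_le (hq₀ : 0 ≤ q) (hq : q ≤ 1 / 5) (l : ℕ) :
    5 / 2 * q ^ (l + 1) ≤ q ^ l / 2 := by
  rw [pow_succ]
  nlinarith [pow_nonneg hq₀ l]

namespace SearchState

lemma exists_mem (h : SearchState q col C l J z) (hq₀ : 0 ≤ q) : ∃ c, c ∈ C :=
  ⟨col z, h.mapsTo fun j => by
    rw [sub_self, abs_zero]
    exact cubeWidth_nonneg (by positivity) j⟩

lemma nonempty (h : SearchState q col C l J z) : J.Nonempty :=
  Finset.card_pos.mp <| lt_of_lt_of_le (by positivity) h.card_le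

lemma succ_of_hits (hq₀ : 0 ≤ q) (hq : q ≤ 1 / 5) (h : SearchState q col C l J z) (hYC : Y ⊆ C)
    (hBJ : B ⊆ J) (hcard : 3 ^ Y.card ≤ B.card) (hbB : ∀ j ∈ B, b j = z j)
    (hb : ∀ j, |b j - z j| ≤ cubeWidth J (3 / 2 * q ^ l) j)
    (hmaps : MapsTo col (coordBox b (cubeWidth B (q ^ l / 2))) Y)
    (hhit : ∀ c ∈ Y, ∀ k ∈ B,
      Hits q col c k l b (B.piecewise (fun _ => q ^ l / 2) (cubeWidth J (q ^ l)))) :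
    SearchState q col Y (l + 1) B b := by
  have hs : 0 ≤ q ^ l := pow_nonneg hq₀ l
  have hs' := five_halves_mul_pow_succ_le hq₀ hq l
  refine ⟨hcard, hmaps.mono_left (coordBox_subset_coordBox fun j => ?_), fun c hc k hk => ?_⟩
  · rw [sub_self, abs_zero, zero_add]
    by_cases hj : j ∈ B
    · rwa [cubeWidth_of_mem hj, cubeWidth_of_mem hj]
    · rw [cubeWidth_of_notMem hj, cubeWidth_of_notMem hj]
  · refine ((h.isExtendable c (hYC hc) k (hBJ hk)).mono (hbB k hk) fun j _ => ?_).succ hq₀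
      (by linarith) (hhit c hc k hk) fun j _ => ?_
    · by_cases hjB : j ∈ B
      · rw [hbB j hjB, sub_self, abs_zero, B.piecewise_eq_of_mem _ _ hjB,
          cubeWidth_of_mem (hBJ hjB)]
        linarith
      · have hbj := hb j
        rw [B.piecewise_eq_of_notMem _ _ hjB]
        by_cases hjJ : j ∈ J
        · simp only [cubeWidth_of_mem hjJ] at *
          linarith
        · simp only [cubeWidth_of_notMem hjJ] at *
          linarith
    · by_cases hjB : j ∈ B
      · rw [B.piecewise_eq_of_mem _ _ hjB, cubeWidth_of_mem hjB]
        linarith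
      · rw [B.piecewise_eq_of_notMem _ _ hjB, cubeWidth_of_notMem hjB, add_zero]
        unfold cubeWidth
        split_ifs <;> simp [hs]

lemma succ (hq₀ : 0 ≤ q) (hq : q ≤ 1 / 5) (h : SearchState q col C l J z)
    (hhit : ∀ c ∈ C, ∀ k ∈ J, Hits q col c k l z (cubeWidth J (q ^ l / 2))) :
    SearchState q col C (l + 1) J z := by
  have hs : 0 ≤ q ^ l := pow_nonneg hq₀ l
  refine h.succ_of_hits hq₀ hq subset_rfl subset_rfl h.card_le (fun _ _ => rfl) (fun j => ?_)
    (h.mapsTo.mono_left (coordBox_subset_coordBox fun j => ?_)) ?_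
  · rw [sub_self, abs_zero]
    exact cubeWidth_nonneg (by positivity) j
  · rw [sub_self, abs_zero, zero_add]
    exact cubeWidth_le (by linarith) j
  · have hwidth : J.piecewise (fun _ => q ^ l / 2) (cubeWidth J (q ^ l)) =
        cubeWidth J (q ^ l / 2) := by
      ext j
      by_cases hj : j ∈ J <;> simp [hj, cubeWidth]
    rwa [hwidth]

lemma exists_not_hits (hq₀ : 0 ≤ q) (hq : q ≤ 1 / 5) (h : SearchState q col C l J z)
    (hno : ∀ c, ¬ HasCopy (geomSet q) {y | col y = c}) :
    ∃ L, SearchState q col C L J z ∧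
      ∃ c ∈ C, ∃ k ∈ J, ¬ Hits q col c k L z (cubeWidth J (q ^ L / 2)) := by
  by_contra! hall
  have hstate : ∀ i, SearchState q col C (l + i) J z := fun i => by
    induction i with
    | zero => exact h
    | succ i ih => exact ih.succ hq₀ hq (hall _ ih)
  obtain ⟨c, hc⟩ := h.exists_mem hq₀
  obtain ⟨k, hk⟩ := h.nonempty
  have hext : IsExtendable q col c k l z (cubeWidth J (q ^ (l + 0) / 2)) :=
    (h.isExtendable c hc k hk).mono rfl fun j _ => by
      rw [sub_self, abs_zero, zero_add]
      exact cubeWidth_le (by rw [add_zero]; linarith [pow_nonneg hq₀ l]) j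
  refine hno c (hext.hasCopy (w := fun i => cubeWidth J (q ^ (l + i) / 2)) hq₀ (by linarith)
    (fun i => hall _ (hstate i) c hc k hk) fun i j _ => ?_)
  have hpow : q ^ (l + (i + 1)) ≤ q ^ (l + i) :=
    pow_le_pow_of_le_one hq₀ (by linarith) (by lia)
  have hs : 0 ≤ q ^ (l + i) := pow_nonneg hq₀ _
  unfold cubeWidth
  split_ifs <;> linarith

lemma exists_avoided_colour (hq₀ : 0 ≤ q) (hq : q ≤ 1 / 5) (h : SearchState q col C l J z)
    (hY : ¬ ∃ B b, SearchState q col Y (l + 1) B b) (hYC : Y ⊆ C)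
    (hb : ReserveShift (q ^ l) J R z b) (hBR : B ⊆ R) (hcard : 3 ^ Y.card ≤ B.card)
    (hmaps : MapsTo col (coordBox (B.piecewise z b) (cubeWidth B (q ^ l / 2))) Y) :
    ∃ d ∈ Y, ∃ b', ReserveShift (q ^ l) J (R \ B) z b' ∧
      coordBox b' (cubeWidth (R \ B) (q ^ l)) ⊆ coordBox b (cubeWidth R (q ^ l)) ∧
      ∀ y ∈ coordBox b' (cubeWidth (R \ B) (q ^ l)), col y ≠ d := by
  have hs : 0 ≤ q ^ l := pow_nonneg hq₀ l
  have hr₀ := tailSum_nonneg hq₀ (by linarith) l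
  have hr := tailSum_le hq₀ (by linarith) l
  have hBJ := hBR.trans hb.subset
  obtain ⟨d, hd, k, hk, hmiss⟩ : ∃ d ∈ Y, ∃ k ∈ B, ¬ Hits q col d k l (B.piecewise z b)
      (B.piecewise (fun _ => q ^ l / 2) (cubeWidth J (q ^ l))) := by
    by_contra! hhit
    exact hY ⟨B, _, h.succ_of_hits hq₀ hq hYC hBJ hcard (fun j hj => B.piecewise_eq_of_mem _ _ hj)
      hb.abs_piecewise_sub_le hmaps hhit⟩
  refine ⟨d, hd, Function.update b k (z k - tailSum q l),
    hb.update Finset.sdiff_subset (hBJ hk) (by simp [hk]) hr₀ hr,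
    hb.coordBox_update_subset hBR hk hr₀ hr, fun y hy hyd => hmiss ⟨y, ?_, hyd⟩⟩
  exact hb.coordBox_update_subset_coordSlice hBR hk hs hy

lemma not_mapsTo_of_reserveShift (hq₀ : 0 ≤ q) (hq : q ≤ 1 / 5)
    (h : SearchState q col C l J z)
    (hC : ∀ Y ⊂ C, ¬ ∃ B b, SearchState q col Y (l + 1) B b) (hYC : Y ⊂ C)
    (hb : ReserveShift (q ^ l) J R z b) (hcard : 2 * 3 ^ Y.card ≤ R.card + 1) :
    ¬ MapsTo col (coordBox b (cubeWidth R (q ^ l))) Y := by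
  classical
  induction Y using Finset.strongInduction generalizing b R with
  | H Y ih =>
    intro hmaps
    have hpow : 0 < 3 ^ Y.card := by positivity
    obtain ⟨B, hBR, hB⟩ := Finset.exists_subset_card_eq (s := R) (n := 3 ^ Y.card) (by lia)
    obtain ⟨d, hd, b', hb', hsub, havoid⟩ := h.exists_avoided_colour hq₀ hq (hC Y hYC) hYC.subset
      hb hBR hB.ge (hmaps.mono_left (hb.coordBox_piecewise_subset hBR (pow_nonneg hq₀ l)))
    have hYd := Finset.erase_ssubset hd
    refine ih (Y.erase d) hYd (hYd.trans hYC) hb' ?_ fun y hy =>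
      Finset.mem_erase.mpr ⟨havoid y hy, hmaps (hsub hy)⟩
    have hthree : 3 ^ Y.card = 3 * 3 ^ (Y.erase d).card := by
      rw [← Finset.card_erase_add_one hd, pow_succ']
    rw [Finset.card_sdiff_of_subset hBR]
    lia

lemma hits_of_forall_ssubset (hq₀ : 0 ≤ q) (hq : q ≤ 1 / 5) (h : SearchState q col C l J z)
    (hC : ∀ Y ⊂ C, ¬ ∃ B b, SearchState q col Y (l + 1) B b) (hc : c ∈ C) (hk : k ∈ J) :
    Hits q col c k l z (cubeWidth J (q ^ l / 2)) := by
  classical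
  by_contra hmiss
  have hs : 0 ≤ q ^ l := pow_nonneg hq₀ l
  have hcardC : 3 ^ C.card = 3 * 3 ^ (C.erase c).card := by
    rw [← Finset.card_erase_add_one hc, pow_succ']
  have hpow : 0 < 3 ^ (C.erase c).card := by positivity
  have hcardJ := h.card_le
  have hJk := Finset.card_erase_add_one hk
  obtain ⟨B, hBJ, hB⟩ := Finset.exists_subset_card_eq (s := J.erase k)
    (n := 3 ^ (C.erase c).card) (by lia)
  have hb := (ReserveShift.piecewise_sub_half hs (J := J) (z := z)).update (J.erase_subset k) hk
    (J.notMem_erase k) (tailSum_nonneg hq₀ (by linarith) l) (tailSum_le hq₀ (by linarith) l)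
  have hmaps := h.mapsTo.mono_left (hb.coordBox_subset hs)
  obtain ⟨d, hd, b', hb', hsub, havoid⟩ := h.exists_avoided_colour hq₀ hq
    (hC _ (Finset.erase_ssubset hc)) (C.erase_subset c) hb hBJ hB.ge fun y hy =>
      Finset.mem_erase.mpr
        ⟨fun hyc => hmiss ⟨y, coordBox_piecewise_update_subset_coordSlice hBJ hs hy, hyc⟩,
          hmaps (hb.coordBox_piecewise_subset hBJ hs hy)⟩
  have hdC := Finset.mem_of_mem_erase hd
  refine h.not_mapsTo_of_reserveShift hq₀ hq hC (Finset.erase_ssubset hdC) hb' ?_ fun y hy =>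
    Finset.mem_erase.mpr ⟨havoid y hy, hmaps (hsub hy)⟩
  have hcardd : (C.erase d).card = (C.erase c).card := by
    rw [Finset.card_erase_of_mem hdC, Finset.card_erase_of_mem hc]
  rw [hcardd, Finset.card_sdiff_of_subset hBJ]
  lia

lemma exists_hasCopy (hq₀ : 0 ≤ q) (hq : q ≤ 1 / 5) (h : SearchState q col C l J z) :
    ∃ c, HasCopy (geomSet q) {y | col y = c} := by
  by_contra! hno
  induction C using Finset.strongInduction generalizing l J z with
  | H C ih =>
    obtain ⟨L, hL, c, hc, k, hk, hmiss⟩ := h.exists_not_hits hq₀ hq hno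
    exact hmiss <|
      hL.hits_of_forall_ssubset hq₀ hq (fun Y hY ⟨_, _, hstate⟩ => ih Y hY hstate) hc hk

end SearchState

end Colouring

theorem exists_hasCopy_geomSet_of_three_pow_card_le {ι κ : Type*} [Fintype ι] [Fintype κ] {q : ℝ}
    (hq₀ : 0 ≤ q) (hq : q ≤ 1 / 5) (hcard : 3 ^ Fintype.card κ ≤ Fintype.card ι)
    (col : (ι → ℝ) → κ) : ∃ c, HasCopy (geomSet q) {y | col y = c} := by
  classical
  have hstate : SearchState q col Finset.univ 0 Finset.univ 0 :=
    ⟨hcard, fun _ _ => Finset.mem_univ _, fun _ _ _ _ => isExtendable_zero⟩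
  exact hstate.exists_hasCopy hq₀ hq

lemma pow_le_of_le_logb {b n N : ℕ} (hN : N ≠ 0) (h : (N : ℝ) ≤ Real.logb b n) : b ^ N ≤ n := by
  have hlog : N ≤ Nat.log b n := by
    rw [← Real.natFloor_logb_natCast]
    exact Nat.le_floor h
  rcases eq_or_ne n 0 with rfl | hn
  · simp [hN] at hlog
  · exact Nat.pow_le_of_le_log hn hlog

/-- There is `q₀ > 0` such that for all `0 < q ≤ q₀` and all `n`,
`χ(ℝ^n_∞, G(q)) > log₃ n`: every colouring of `ℝ^n` (max metric) with at most
`log₃ n` colours has a monochromatic isometric copy of `G(q)`. -/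
theorem chi_geom_gt_log :
    ∃ q0 : ℝ, 0 < q0 ∧ ∀ q : ℝ, 0 < q → q ≤ q0 → ∀ n N : ℕ,
      (N : ℝ) ≤ Real.logb 3 n →
        ∀ c : (Fin n → ℝ) → Fin N, ∃ i : Fin N, HasCopy (geomSet q) {x | c x = i} := by
  refine ⟨1 / 5, by norm_num, fun q hq₀ hq n N hN col => ?_⟩
  have hN₀ : N ≠ 0 := (Fin.pos (col 0)).ne'
  have hcard : 3 ^ N ≤ n := pow_le_of_le_logb hN₀ (by exact_mod_cast hN)
  exact exists_hasCopy_geomSet_of_three_pow_card_le hq₀.le hq (by simpa using hcard) col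
end

section
/- Let n ∈ ℕ and let H ⊂ ℝ^n be the set of all 2^n vertices of an axis-parallel n-dimensional hyperrectangle with positive side lengths, i.e., H = {a_1, b_1} × ⋯ × {a_n, b_n} with a_i < b_i for every i, equipped with the max-norm metric. Then H cannot be isometrically embedded into ℝ^{n−1}_∞: there is no distance-preserving injection from H into ℝ^{n−1} with the max-norm metric. -/
open Set Filter

/-!
A product of two-point spaces is ultrametric in the max metric, and `n` factors give `2 ^ n` points.
A 1-Lipschitz function `f` on an ultrametric space cannot attain the distance on both steps of a
rise `f s < f t < f u`, since `dist s u` is at most the larger step. Given an isometry into `ℝ^m`,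
record for each point the coordinates in which it is the lower end of a pair attaining the distance.
Any two points attain their distance in some coordinate, and there the lower one is recorded and the
upper one is not. So an ultrametric subspace of `ℝ^m` injects into the subsets of `m` coordinates
and has at most `2 ^ m` points.
-/

section Ultrametric

variable {S κ : Type*}

/-- The point `s` is the lower end of a pair of points on which `f` attains the distance. The
condition `f s < f t` excludes the pair `(s, s)`. -/
def IsLowerEnd [Dist S] (f : S → ℝ) (s : S) : Prop :=
  ∃ t, f s < f t ∧ f t - f s = dist t s

theorem not_isLowerEnd_of_sub_eq_dist [PseudoMetricSpace S] [IsUltrametricDist S] {f : S → ℝ}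
    (hf : LipschitzWith 1 f) {s t : S} (hst : f s < f t) (h : f t - f s = dist t s) :
    ¬ IsLowerEnd f t := by
  rintro ⟨u, htu, hu⟩
  have hus : f u - f s ≤ max (dist u t) (dist t s) :=
    calc f u - f s ≤ dist (f u) (f s) := le_abs_self _
      _ ≤ dist u s := by simpa using hf.dist_le_mul u s
      _ ≤ max (dist u t) (dist t s) := IsUltrametricDist.dist_triangle_max u t s
  rcases le_max_iff.mp hus with hus | hus <;> linarith

theorem not_isLowerEnd_iff_of_dist_eq [PseudoMetricSpace S] [IsUltrametricDist S] {f : S → ℝ}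
    (hf : LipschitzWith 1 f) {s t : S} (hst : 0 < dist s t) (h : dist (f s) (f t) = dist s t) :
    ¬ (IsLowerEnd f s ↔ IsLowerEnd f t) := by
  wlog hle : f s ≤ f t generalizing s t
  · rw [iff_comm]
    exact this (dist_comm s t ▸ hst) (by simpa only [dist_comm] using h) (le_of_not_ge hle)
  have hsub : f t - f s = dist t s := by
    rw [dist_comm t s, ← h, dist_comm, Real.dist_eq, abs_of_nonneg (sub_nonneg.mpr hle)]
  have hlt : f s < f t := by
    rw [← sub_pos, hsub, dist_comm]
    exact hst
  exact fun hiff ↦ not_isLowerEnd_of_sub_eq_dist hf hlt hsub (hiff.mp ⟨t, hlt, hsub⟩)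

theorem injective_setOf_isLowerEnd [Fintype κ] [MetricSpace S] [IsUltrametricDist S]
    {F : S → κ → ℝ} (hF : Isometry F) :
    Function.Injective fun s ↦ {j | IsLowerEnd (fun t ↦ F t j) s} := by
  intro s t hst
  by_contra hne
  obtain ⟨⟨j, hj⟩, -⟩ := (dist_pi_eq_iff (dist_pos.mpr hne)).mp (hF.dist_eq s t)
  have hlip : LipschitzWith 1 fun u ↦ F u j :=
    .mk_one fun u v ↦ hF.dist_eq u v ▸ dist_le_pi_dist (F u) (F v) j
  exact not_isLowerEnd_iff_of_dist_eq hlip (dist_pos.mpr hne) hj (Set.ext_iff.mp hst j)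

theorem enatCard_le_two_pow_of_isometry [Fintype κ] [MetricSpace S] [IsUltrametricDist S]
    {F : S → κ → ℝ} (hF : Isometry F) : ENat.card S ≤ 2 ^ Fintype.card κ := by
  simpa using ENat.card_le_card_of_injective (injective_setOf_isLowerEnd hF)

end Ultrametric

theorem isUltrametricDist_pair {X : Type*} [PseudoMetricSpace X] (a b : X) :
    IsUltrametricDist ({a, b} : Set X) where
  dist_triangle_max := by
    rintro ⟨x, rfl | rfl⟩ ⟨y, rfl | rfl⟩ ⟨z, rfl | rfl⟩ <;> simp

theorem natCard_pi_pair {ι : Type*} [Fintype ι] {X : ι → Type*} {a b : ∀ i, X i}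
    (hab : ∀ i, a i ≠ b i) : Nat.card (∀ i, ({a i, b i} : Set (X i))) = 2 ^ Fintype.card ι := by
  simp [Nat.card_pi, Nat.card_coe_set_eq, Set.ncard_pair (hab _)]

theorem hyperrectangle_not_embed_general {ι κ : Type*} [Fintype ι] [Fintype κ]
    (hcard : Fintype.card κ < Fintype.card ι) {X : ι → Type*} [∀ i, MetricSpace (X i)]
    {a b : ∀ i, X i} (hab : ∀ i, a i ≠ b i) :
    ¬ ∃ f : (∀ i, X i) → (κ → ℝ),
        ∀ x ∈ {x : ∀ i, X i | ∀ i, x i = a i ∨ x i = b i},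
          ∀ y ∈ {x : ∀ i, X i | ∀ i, x i = a i ∨ x i = b i},
            dist (f x) (f y) = dist x y := by
  rintro ⟨f, hf⟩
  have hultra (i : ι) : IsUltrametricDist ({a i, b i} : Set (X i)) :=
    isUltrametricDist_pair (a i) (b i)
  have hiso : Isometry fun s : ∀ i, ({a i, b i} : Set (X i)) ↦ f fun i ↦ s i :=
    Isometry.of_dist_eq fun s t ↦ hf _ (fun i ↦ (s i).2) _ fun i ↦ (t i).2
  have hle : 2 ^ Fintype.card ι ≤ 2 ^ Fintype.card κ := by
    have h := enatCard_le_two_pow_of_isometry hiso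
    rw [ENat.card_eq_coe_natCard, natCard_pi_pair hab] at h
    exact_mod_cast h
  exact hcard.not_ge ((Nat.pow_le_pow_iff_right one_lt_two).mp hle)

/-- The vertex set of an `n`-dimensional axis-parallel hyperrectangle (with positive
side lengths) in `ℝ^n` with the max metric cannot be isometrically embedded into
`ℝ^(n-1)` with the max metric. -/
theorem hyperrectangle_not_embed (n : ℕ) (hn : 0 < n) (a b : Fin n → ℝ)
    (hab : ∀ i, a i < b i) :
    ¬ ∃ f : (Fin n → ℝ) → (Fin (n - 1) → ℝ),
        ∀ x ∈ {x : Fin n → ℝ | ∀ i, x i = a i ∨ x i = b i},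
          ∀ y ∈ {x : Fin n → ℝ | ∀ i, x i = a i ∨ x i = b i},
            dist (f x) (f y) = dist x y :=
  hyperrectangle_not_embed_general (by simpa using hn) fun i ↦ (hab i).ne
end

section
/- Let B = B(λ_1,…,λ_k) be an arbitrary baton and let X ⊂ ℝ be a finite set. Then for all n ∈ ℕ, α(X^n, B) = α_tr(X, B)^n, where X^n ⊆ ℝ^n carries the max-norm metric; i.e., the maximum cardinality of a subset of X^n containing no isometric copy of B equals the n-th power of the maximum cardinality of a B-tr-free subset of X. -/
open Set Filter

/-- The baton `B(λ₁,…,λ_k)`: the set of partial sums `σ₀,…,σ_k` of `λ₁,…,λ_k`. -/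
noncomputable def baton (lam : ℕ → ℝ) (k : ℕ) : Set ℝ :=
  (fun r => ∑ j ∈ Finset.range r, lam j) '' Set.Iic k

/-!
In `ℝ × E` with the max metric, let `p` precede `q` when `dist p.2 q.2 < q.1 - p.1`. On chains of
this strict order the first projection preserves distances, on antichains the second one does, so
Mirsky's theorem makes `alpha` submultiplicative under products with subsets of the line.

Conversely, an isometric embedding `f` of `B` into a power of `ℝ` attains the distance between
`f (min B)` and `f (max B)` in some coordinate. That coordinate is nonexpanding and spans the whole
length of `B`, hence is a translation or a reflection on `B`; so products of tr-free sets contain no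
copy of `B`.
-/

/-- The maximum cardinality of a subset of `X` with property `P`. The set of cardinalities has to be
nonempty and bounded for this to be meaningful; otherwise the supremum in `ℕ` is `0`. -/
noncomputable def maxCard {α : Type*} (X : Set α) (P : Set α → Prop) : ℕ :=
  sSup {c | ∃ Y ⊆ X, Y.ncard = c ∧ P Y}

/-- The paper's `α(X, M)`: the maximum cardinality of a subset of `X` without isometric copies
of `M`. -/
noncomputable def alpha {α β : Type*} [MetricSpace α] [MetricSpace β] (X : Set β) (M : Set α) : ℕ :=
  maxCard X fun Y => ¬ HasCopy M Y

/-- `A` is `S`-tr-free: it contains no translate of `S` or of `-S`. -/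
def IsTrFree (S A : Set ℝ) : Prop :=
  ∀ t : ℝ, ¬ ((fun s => s + t) '' S ⊆ A) ∧ ¬ ((fun s => -s + t) '' S ⊆ A)

/-- The paper's `α_tr(X, S)`: the maximum cardinality of an `S`-tr-free subset of `X`. -/
noncomputable def alphaTr (X S : Set ℝ) : ℕ :=
  maxCard X (IsTrFree S)

section MaxCard

variable {α : Type*} {X Y : Set α} {P Q : Set α → Prop}

lemma maxCard_le {c : ℕ} (h : ∀ Y ⊆ X, P Y → Y.ncard ≤ c) : maxCard X P ≤ c := by
  refine csSup_le' ?_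
  rintro _ ⟨Y, hYX, rfl, hY⟩
  exact h Y hYX hY

lemma bddAbove_ncard_subset (hX : X.Finite) :
    BddAbove {c | ∃ Y ⊆ X, Y.ncard = c ∧ P Y} := by
  refine ⟨X.ncard, ?_⟩
  rintro _ ⟨Y, hYX, rfl, -⟩
  exact ncard_le_ncard hYX hX

lemma ncard_le_maxCard (hX : X.Finite) (hYX : Y ⊆ X) (hY : P Y) : Y.ncard ≤ maxCard X P :=
  le_csSup (bddAbove_ncard_subset hX) ⟨Y, hYX, rfl, hY⟩

lemma maxCard_mono (hX : X.Finite) (hPQ : ∀ Y ⊆ X, P Y → Q Y) : maxCard X P ≤ maxCard X Q :=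
  maxCard_le fun Y hYX hY => ncard_le_maxCard hX hYX (hPQ Y hYX hY)

lemma exists_ncard_eq_maxCard (hX : X.Finite) (h : P ∅) :
    ∃ Y ⊆ X, Y.ncard = maxCard X P ∧ P Y :=
  Nat.sSup_mem (s := {c | ∃ Y ⊆ X, Y.ncard = c ∧ P Y})
    ⟨0, ∅, empty_subset X, ncard_empty α, h⟩ (bddAbove_ncard_subset hX)

end MaxCard

section Mirsky

variable {α : Type*} {r : α → α → Prop}

lemma isAntichain_setOf_forall_not_rel (Y : Set α) :
    IsAntichain r {x ∈ Y | ∀ z ∈ Y, ¬ r z x} :=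
  fun _ hx _ hy _ => hy.2 _ hx.1

variable [IsStrictOrder α r]

lemma exists_forall_ne_rel_of_isChain {C : Set α} (hC : IsChain r C) (hfin : C.Finite)
    (hne : C.Nonempty) : ∃ x ∈ C, ∀ y ∈ C, y ≠ x → r x y := by
  obtain ⟨⟨x, hx⟩, -, hmin⟩ :=
    WellFounded.has_min (hfin.wellFoundedOn (r := r)) univ ⟨⟨_, hne.some_mem⟩, trivial⟩
  exact ⟨x, hx, fun y hy hyx => (hC hy hx hyx).resolve_left (hmin ⟨y, hy⟩ trivial)⟩

/-- Mirsky's theorem, by peeling off the minimal elements. -/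
lemma ncard_le_mul_of_isChain_of_isAntichain {Y : Set α} (hY : Y.Finite) {m q : ℕ}
    (hchain : ∀ C ⊆ Y, IsChain r C → C.ncard ≤ m)
    (hanti : ∀ A ⊆ Y, IsAntichain r A → A.ncard ≤ q) : Y.ncard ≤ m * q := by
  induction m generalizing Y with
  | zero =>
    have hempty : Y = ∅ := by
      refine eq_empty_of_forall_notMem fun x hx => ?_
      simpa using hchain {x} (singleton_subset_iff.2 hx) IsChain.singleton
    simp [hempty]
  | succ m ih =>
    set M := {x ∈ Y | ∀ z ∈ Y, ¬ r z x}
    have hMY : M ⊆ Y := sep_subset _ _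
    have hM : M.ncard ≤ q := hanti M hMY (isAntichain_setOf_forall_not_rel Y)
    have hrest : (Y \ M).ncard ≤ m * q := by
      refine ih hY.sdiff (fun C hCYM hC => ?_) fun A hA => hanti A (hA.trans sdiff_subset)
      have hCY : C ⊆ Y := hCYM.trans sdiff_subset
      have hCfin : C.Finite := hY.subset hCY
      rcases C.eq_empty_or_nonempty with rfl | hne
      · simp
      obtain ⟨x, hx, hxC⟩ := exists_forall_ne_rel_of_isChain hC hCfin hne
      -- The least element of `C` is not minimal in `Y`, so `C` extends downwards.
      obtain ⟨z, hz, hzx⟩ : ∃ z ∈ Y, r z x := by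
        by_contra! hmin
        exact (hCYM hx).2 ⟨hCY hx, hmin⟩
      have hzC : ∀ y ∈ C, r z y := fun y hy => by
        rcases eq_or_ne y x with rfl | hyx
        exacts [hzx, trans_of r hzx (hxC y hy hyx)]
      have hznotMem : z ∉ C := fun h => irrefl_of r z (hzC z h)
      have := hchain (insert z C) (insert_subset hz hCY) (hC.insert fun y hy _ => .inl (hzC y hy))
      rw [ncard_insert_of_notMem hznotMem hCfin] at this
      exact Nat.le_of_succ_le_succ this
    calc Y.ncard = (Y \ M).ncard + M.ncard := (ncard_sdiff_add_ncard_of_subset hMY hY).symm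
      _ ≤ m * q + q := add_le_add hrest hM
      _ = (m + 1) * q := (Nat.succ_mul m q).symm

end Mirsky

section Copies

variable {α β γ : Type*} [MetricSpace α] [MetricSpace β] [MetricSpace γ] {M : Set α}

lemma HasCopy.mono {A A' : Set β} (h : HasCopy M A) (hA : A ⊆ A') : HasCopy M A' :=
  let ⟨f, hf, hfA⟩ := h
  ⟨f, hf, hfA.trans hA⟩

lemma HasCopy.finite {A : Set β} (h : HasCopy M A) (hA : A.Finite) : M.Finite := by
  obtain ⟨f, hf, hfA⟩ := h
  refine (hA.subset hfA).of_finite_image fun x hx y hy hxy => ?_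
  rw [← dist_eq_zero, ← hf x hx y hy, hxy, dist_self]

variable [Nonempty β] {φ : β → γ} {Y : Set β}

lemma HasCopy.of_image (hφ : ∀ x ∈ Y, ∀ y ∈ Y, dist (φ x) (φ y) = dist x y)
    (h : HasCopy M (φ '' Y)) : HasCopy M Y := by
  obtain ⟨f, hf, hfY⟩ := h
  have hf_mem : ∀ x ∈ M, f x ∈ φ '' Y := fun x hx => hfY (mem_image_of_mem f hx)
  refine ⟨Function.invFunOn φ Y ∘ f, fun x hx y hy => ?_, ?_⟩
  · rw [Function.comp_apply, Function.comp_apply,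
      ← hφ _ (Function.invFunOn_mem (hf_mem x hx)) _ (Function.invFunOn_mem (hf_mem y hy)),
      Function.invFunOn_eq (hf_mem x hx), Function.invFunOn_eq (hf_mem y hy), hf x hx y hy]
  · rintro _ ⟨x, hx, rfl⟩
    exact Function.invFunOn_mem (hf_mem x hx)

lemma ncard_le_alpha_of_dist_eq {X : Set γ} (hX : X.Finite)
    (hφ : ∀ x ∈ Y, ∀ y ∈ Y, dist (φ x) (φ y) = dist x y) (hφX : MapsTo φ Y X)
    (hY : ¬ HasCopy M Y) : Y.ncard ≤ alpha X M := by
  have hinj : InjOn φ Y := fun x hx y hy hxy => by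
    rw [← dist_eq_zero, ← hφ x hx y hy, hxy, dist_self]
  rw [← hinj.ncard_image]
  exact ncard_le_maxCard hX hφX.image_subset fun h => hY (h.of_image hφ)

lemma alpha_le_of_isometry {X : Set γ} (hX : X.Finite) (hφ : Isometry φ) (hφX : MapsTo φ Y X) :
    alpha Y M ≤ alpha X M :=
  maxCard_le fun _ hZY =>
    ncard_le_alpha_of_dist_eq hX (fun x _ y _ => hφ.dist_eq x y) (hφX.mono_left hZY)

end Copies

section Timelike

variable {E : Type*} [MetricSpace E]

/-- The timelike order on `ℝ × E`, with the first factor as time: `q` lies in the open forward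
light cone of `p`. -/
def Timelike (p q : ℝ × E) : Prop :=
  dist p.2 q.2 < q.1 - p.1

instance : IsStrictOrder (ℝ × E) Timelike where
  irrefl p := by simp [Timelike]
  trans p q s hpq hqs := by
    unfold Timelike at *
    linarith [dist_triangle p.2 q.2 s.2]

lemma Timelike.dist_fst_eq {p q : ℝ × E} (h : Timelike p q) : dist p.1 q.1 = dist p q := by
  rw [Prod.dist_eq, eq_comm, max_eq_left_iff, dist_comm p.1, Real.dist_eq]
  exact h.le.trans (le_abs_self _)

lemma dist_snd_eq_of_not_timelike {p q : ℝ × E} (hpq : ¬ Timelike p q) (hqp : ¬ Timelike q p) :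
    dist p.2 q.2 = dist p q := by
  rw [Timelike, not_lt] at hpq hqp
  rw [Prod.dist_eq, eq_comm, max_eq_right_iff, Real.dist_eq, abs_sub_le_iff]
  exact ⟨dist_comm p.2 q.2 ▸ hqp, hpq⟩

lemma dist_fst_eq_of_isChain_timelike {C : Set (ℝ × E)} (hC : IsChain Timelike C) :
    ∀ p ∈ C, ∀ q ∈ C, dist p.1 q.1 = dist p q := by
  intro p hp q hq
  rcases eq_or_ne p q with rfl | hne
  · simp
  rcases hC hp hq hne with h | h
  · exact h.dist_fst_eq
  · rw [dist_comm, h.dist_fst_eq, dist_comm]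

lemma dist_snd_eq_of_isAntichain_timelike {A : Set (ℝ × E)} (hA : IsAntichain Timelike A) :
    ∀ p ∈ A, ∀ q ∈ A, dist p.2 q.2 = dist p q := by
  intro p hp q hq
  rcases eq_or_ne p q with rfl | hne
  · simp
  · exact dist_snd_eq_of_not_timelike (hA hp hq hne) (hA hq hp hne.symm)

end Timelike

section UpperBound

variable {α : Type*} [MetricSpace α]

lemma alpha_prod_le {E : Type*} [MetricSpace E] [Nonempty E] {X : Set ℝ} {Y : Set E}
    (hX : X.Finite) (hY : Y.Finite) (M : Set α) :
    alpha (X ×ˢ Y) M ≤ alpha X M * alpha Y M := by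
  refine maxCard_le fun Z hZ hfree => ?_
  refine ncard_le_mul_of_isChain_of_isAntichain (r := Timelike) ((hX.prod hY).subset hZ)
    (fun C hCZ hC => ?_) fun A hAZ hA => ?_
  · exact ncard_le_alpha_of_dist_eq hX (dist_fst_eq_of_isChain_timelike hC)
      (fun p hp => (hZ (hCZ hp)).1) fun h => hfree (h.mono hCZ)
  · exact ncard_le_alpha_of_dist_eq hY (dist_snd_eq_of_isAntichain_timelike hA)
      (fun p hp => (hZ (hAZ hp)).2) fun h => hfree (h.mono hAZ)

lemma isometry_apply_zero_tail {n : ℕ} {E : Fin (n + 1) → Type*} [∀ i, PseudoMetricSpace (E i)] :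
    Isometry fun x : ∀ i, E i => (x 0, Fin.tail x) := by
  refine Isometry.of_dist_eq fun x y => eq_of_forall_ge_iff fun c => ?_
  rcases lt_or_ge c 0 with hc | hc
  · exact iff_of_false (hc.trans_le dist_nonneg).not_ge (hc.trans_le dist_nonneg).not_ge
  · simp only [Prod.dist_eq, max_le_iff, dist_pi_le_iff hc, Fin.forall_fin_succ, Fin.tail]

lemma alpha_pi_fin_le {n : ℕ} {X : Fin n → Set ℝ} (hX : ∀ i, (X i).Finite) (M : Set α) :
    alpha (univ.pi X) M ≤ ∏ i, alpha (X i) M := by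
  induction n with
  | zero => exact maxCard_le fun Y _ _ => by simpa using ncard_le_one_of_subsingleton Y
  | succ n ih =>
    have htail : (univ.pi (Fin.tail X)).Finite := Finite.pi fun i => hX i.succ
    calc alpha (univ.pi X) M ≤ alpha (X 0 ×ˢ univ.pi (Fin.tail X)) M :=
          alpha_le_of_isometry ((hX 0).prod htail) isometry_apply_zero_tail
            fun x hx => ⟨hx 0 trivial, fun i _ => hx i.succ trivial⟩
      _ ≤ alpha (X 0) M * alpha (univ.pi (Fin.tail X)) M := alpha_prod_le (hX 0) htail M
      _ ≤ alpha (X 0) M * ∏ i, alpha (Fin.tail X i) M :=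
          Nat.mul_le_mul_left _ (ih fun i => hX i.succ)
      _ = ∏ i, alpha (X i) M := (Fin.prod_univ_succ fun i => alpha (X i) M).symm

lemma alpha_pi_le {ι : Type*} [Fintype ι] {X : ι → Set ℝ} (hX : ∀ i, (X i).Finite) (M : Set α) :
    alpha (univ.pi X) M ≤ ∏ i, alpha (X i) M := by
  let e := Fintype.equivFin ι
  calc alpha (univ.pi X) M ≤ alpha (univ.pi fun j => X (e.symm j)) M :=
        alpha_le_of_isometry (Finite.pi fun j => hX (e.symm j))
          (IsometryEquiv.piCongrLeft' (Y := fun _ : ι => ℝ) e).isometry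
          fun x hx j _ => hx (e.symm j) trivial
    _ ≤ ∏ j, alpha (X (e.symm j)) M := alpha_pi_fin_le (fun j => hX (e.symm j)) M
    _ = ∏ i, alpha (X i) M := e.symm.prod_comp fun i => alpha (X i) M

end UpperBound

section TrFree

variable {A S : Set ℝ}

lemma isTrFree_empty (hS : S.Nonempty) : IsTrFree S ∅ :=
  fun _ => ⟨fun h => (hS.image _).not_subset_empty h, fun h => (hS.image _).not_subset_empty h⟩

lemma isTrFree_of_not_hasCopy (h : ¬ HasCopy S A) : IsTrFree S A :=
  fun t => ⟨fun hA => h ⟨(· + t), fun x _ y _ => dist_add_right x y t, hA⟩,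
    fun hA => h ⟨(-· + t), fun x _ y _ => by rw [dist_add_right, dist_neg_neg], hA⟩⟩

lemma alpha_le_alphaTr {X : Set ℝ} (hX : X.Finite) (S : Set ℝ) : alpha X S ≤ alphaTr X S :=
  maxCard_mono hX fun _ _ => isTrFree_of_not_hasCopy

lemma not_isTrFree_of_dist_le {g : ℝ → ℝ} {a b : ℝ} (ha : IsLeast S a) (hb : IsGreatest S b)
    (hg : ∀ s ∈ S, ∀ t ∈ S, dist (g s) (g t) ≤ dist s t) (hgab : dist (g a) (g b) = dist a b)
    (hgA : MapsTo g S A) : ¬ IsTrFree S A := by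
  intro hA
  have hlow : ∀ s ∈ S, |g s - g a| ≤ s - a := fun s hs => by
    simpa [Real.dist_eq, abs_of_nonneg (sub_nonneg.2 (ha.2 hs))] using hg s hs a ha.1
  have hupp : ∀ s ∈ S, |g b - g s| ≤ b - s := fun s hs => by
    simpa [Real.dist_eq, abs_of_nonneg (sub_nonneg.2 (hb.2 hs))] using hg b hb.1 s hs
  have hab : |g b - g a| = b - a := by
    rwa [dist_comm, dist_comm a, Real.dist_eq, Real.dist_eq,
      abs_of_nonneg (sub_nonneg.2 (ha.2 hb.1))] at hgab
  rcases abs_choice (g b - g a) with h | h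
  · refine (hA (g a - a)).1 (image_subset_iff.2 fun s hs => ?_)
    have hgs : g s = s + (g a - a) := by
      linarith [(abs_le.1 (hlow s hs)).2, (abs_le.1 (hupp s hs)).2]
    rw [mem_preimage, ← hgs]
    exact hgA hs
  · refine (hA (g a + a)).2 (image_subset_iff.2 fun s hs => ?_)
    have hgs : g s = -s + (g a + a) := by
      linarith [(abs_le.1 (hlow s hs)).1, (abs_le.1 (hupp s hs)).1]
    rw [mem_preimage, ← hgs]
    exact hgA hs

lemma not_hasCopy_pi {ι : Type*} [Fintype ι] {A : ι → Set ℝ} (hS : S.Nontrivial)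
    (hfin : ∀ i, (A i).Finite) (hA : ∀ i, IsTrFree S (A i)) : ¬ HasCopy S (univ.pi A) := by
  intro hcopy
  have hSfin : S.Finite := hcopy.finite (Finite.pi hfin)
  obtain ⟨a, ha⟩ : ∃ a, IsLeast S a := hSfin.isCompact.exists_isLeast hS.nonempty
  obtain ⟨b, hb⟩ : ∃ b, IsGreatest S b := hSfin.isCompact.exists_isGreatest hS.nonempty
  have hab : a ≠ b := by
    rintro rfl
    exact hS.not_subsingleton fun x hx y hy =>
      le_antisymm ((hb.2 hx).trans (ha.2 hy)) ((hb.2 hy).trans (ha.2 hx))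
  obtain ⟨f, hf, hfA⟩ := hcopy
  obtain ⟨i, hi⟩ : ∃ i, dist (f a i) (f b i) = dist a b :=
    ((dist_pi_eq_iff (dist_pos.2 hab)).1 (hf a ha.1 b hb.1)).1
  refine not_isTrFree_of_dist_le ha hb (fun s hs t ht => ?_) hi
    (fun s hs => hfA (mem_image_of_mem f hs) i trivial) (hA i)
  exact (dist_le_pi_dist (f s) (f t) i).trans_eq (hf s hs t ht)

end TrFree

lemma ncard_univ_pi {ι : Type*} [Fintype ι] {α : ι → Type*} (s : ∀ i, Set (α i)) :
    (univ.pi s).ncard = ∏ i, (s i).ncard := by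
  simp only [← Nat.card_coe_set_eq, ← Nat.card_pi]
  exact Nat.card_congr (Equiv.Set.univPi s)

lemma prod_alphaTr_le_alpha_pi {ι : Type*} [Fintype ι] {X : ι → Set ℝ} {S : Set ℝ}
    (hS : S.Nontrivial) (hX : ∀ i, (X i).Finite) : ∏ i, alphaTr (X i) S ≤ alpha (univ.pi X) S := by
  choose A hAX hAcard hA using fun i =>
    exists_ncard_eq_maxCard (hX i) (isTrFree_empty hS.nonempty)
  calc ∏ i, alphaTr (X i) S = ∏ i, (A i).ncard := Finset.prod_congr rfl fun i _ => (hAcard i).symm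
    _ = (univ.pi A).ncard := (ncard_univ_pi A).symm
    _ ≤ alpha (univ.pi X) S :=
        ncard_le_maxCard (Finite.pi hX) (pi_mono fun i _ => hAX i)
          (not_hasCopy_pi hS (fun i => (hX i).subset (hAX i)) hA)

lemma baton_nontrivial {lam : ℕ → ℝ} {k : ℕ} (hk : 0 < k) (hpos : ∀ j < k, 0 < lam j) :
    (baton lam k).Nontrivial := by
  refine ⟨0, ⟨0, Nat.zero_le k, Finset.sum_range_zero lam⟩, lam 0, ⟨1, hk, ?_⟩, (hpos 0 hk).ne⟩
  exact Finset.sum_range_one lam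

theorem alpha_power_eq_general {ι : Type*} [Fintype ι] {X : ι → Set ℝ} {S : Set ℝ}
    (hS : S.Nontrivial) (hX : ∀ i, (X i).Finite) :
    alpha (univ.pi X) S = ∏ i, alphaTr (X i) S :=
  le_antisymm
    ((alpha_pi_le hX S).trans (Finset.prod_le_prod' fun i _ => alpha_le_alphaTr (hX i) S))
    (prod_alphaTr_le_alpha_pi hS hX)

/-- For a baton `B` and a finite `X ⊆ ℝ`, `α(X^n, B) = α_tr(X, B)^n`: the maximum size
of a `B`-free subset of `X^n ⊆ ℝ^n` (max metric) is the `n`-th power of the maximum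
size of a `B`-tr-free subset of `X`. -/
theorem alpha_power_eq (k : ℕ) (hk : 0 < k) (lam : ℕ → ℝ) (hpos : ∀ j < k, 0 < lam j)
    (X : Set ℝ) (hX : X.Finite) (n : ℕ) (hn : 0 < n) :
    sSup {c : ℕ | ∃ Y ⊆ {x : Fin n → ℝ | ∀ i, x i ∈ X},
        Y.ncard = c ∧ ¬ HasCopy (baton lam k) Y}
  = (sSup {c : ℕ | ∃ A ⊆ X, A.ncard = c ∧
        ∀ t : ℝ, ¬ ((fun s => s + t) '' baton lam k ⊆ A) ∧
                 ¬ ((fun s => -s + t) '' baton lam k ⊆ A)}) ^ n := by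
  simpa only [alpha, alphaTr, maxCard, IsTrFree, Set.pi, mem_univ, true_imp_iff, Fin.prod_const]
    using alpha_power_eq_general (baton_nontrivial hk hpos) fun _ : Fin n => hX
end

section
/- For all integers k ≥ 2 and m, n ≥ 1, the maximum cardinality of a subset of {0,1,…,k}^n (equipped with the max-norm metric inherited from ℝ^n) that contains no isometric copy of {0,1,…,k}^m (equipped with the max-norm metric inherited from ℝ^m) equals Σ_{i=0}^{m−1} C(n,i)·k^{n−i}. -/
/-!
Let `b(n, m)` be the right-hand side; Pascal's rule gives
`b(n + 1, m + 1) = k * b(n, m + 1) + b(n, m)`.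

*Upper bound*, by induction on `n`. Over `y ∈ {0,…,k}^n`, let `g(y)` be the least height missing
from the column `{t | (t, y) ∈ A}`. The points of that column below the gap lie at heights
`0, …, g(y) - 1`, those above it at heights between `g(y) + 1` and `k`; lowering the index of the
latter by one distributes the points of `A` with `g(y) ≤ k` over `k` layers. Each layer is the graph
of a function with two consecutive values, hence 1-Lipschitz, so the projection of a layer has no
copy of `{0,…,k}^m` if `A` has none. Full columns need one extra layer, the graph of the constant
`k` over the set of full columns, which has no copy of `{0,…,k}^m` if `A` has no copy of
`{0,…,k}^(m+1)`.

*Lower bound.* Take the points having fewer than `m` coordinates equal to a fixed `v` in the middle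
third of `{0,…,k}`. Let `f` be an isometry of `{0,…,k}^m` into `{0,…,k}^n`. The two ends of the
`j`-th axis through `(v,…,v)` are at distance `k`, so some coordinate `i j` of `f` takes the values
`0` and `k` there. Different axes are too close to each other to share such a coordinate, and the
point whose `j`-th entry is `v` or `k - v`, according to the direction in which the coordinate `i j`
increases along the axis, is mapped by `f` to a point whose `m` coordinates `i j` all equal `v`.
-/

open Set Filter

/-- `{0,1,…,k}^m ⊆ ℝ^m` with the max metric. -/
def box (m k : ℕ) : Set (Fin m → ℝ) :=
  {x | ∀ i, ∃ j : ℕ, j ≤ k ∧ x i = (j : ℝ)}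

open scoped Finset

/-- The first `m` terms of the binomial expansion of `(1 + k) ^ n`. -/
def partialBinomSum (k n m : ℕ) : ℕ := ∑ i ∈ Finset.range m, n.choose i * k ^ (n - i)

theorem partialBinomSum_zero_succ (k m : ℕ) : partialBinomSum k 0 (m + 1) = 1 := by
  simp [partialBinomSum, Finset.sum_range_succ']

theorem partialBinomSum_succ_succ (k n m : ℕ) :
    partialBinomSum k (n + 1) (m + 1) =
      k * partialBinomSum k n (m + 1) + partialBinomSum k n m := by
  have pascal (i : ℕ) : (n + 1).choose (i + 1) * k ^ (n + 1 - (i + 1)) =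
      k * (n.choose (i + 1) * k ^ (n - (i + 1))) + n.choose i * k ^ (n - i) := by
    rw [Nat.choose_succ_succ, Nat.add_sub_add_right]
    rcases Nat.lt_or_ge i n with hi | hi
    · rw [show n - i = n - (i + 1) + 1 by omega]
      ring
    · rw [Nat.choose_eq_zero_of_lt (Nat.lt_succ_of_le hi)]
      ring
  simp only [partialBinomSum, Finset.sum_range_succ' _ m, pascal, Finset.sum_add_distrib,
    mul_add, Finset.mul_sum, Nat.choose_zero_right, Nat.sub_zero, pow_succ]
  ring

section Counting

variable {ι α : Type*} [Fintype ι] [DecidableEq ι] [DecidableEq α] {s : Finset α} {v : α}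

theorem card_filter_piFinset_level_set_eq (hv : v ∈ s) (S : Finset ι) :
    #{x ∈ Fintype.piFinset fun _ : ι ↦ s | ({i | x i = v} : Finset ι) = S} =
      (#s - 1) ^ (Fintype.card ι - #S) := by
  have hfiber : {x ∈ Fintype.piFinset fun _ : ι ↦ s | ({i | x i = v} : Finset ι) = S} =
      Fintype.piFinset fun i ↦ if i ∈ S then {v} else s.erase v := by
    ext x
    simp only [Finset.mem_filter, Fintype.mem_piFinset, Finset.ext_iff, Finset.mem_univ, true_and,
      ← forall_and]
    refine forall_congr' fun i ↦ ?_
    by_cases hi : i ∈ S <;> simp +contextual [hi, hv, and_comm]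
  have hcard (i : ι) : #(if i ∈ S then {v} else s.erase v) = if i ∈ S then 1 else #s - 1 := by
    split_ifs <;> simp [hv]
  rw [hfiber, Fintype.card_piFinset]
  simp only [hcard, Finset.prod_ite, Finset.prod_const, one_pow, one_mul]
  rw [Finset.filter_not, Finset.filter_univ_mem, ← Finset.compl_eq_univ_sdiff, Finset.card_compl]

theorem card_filter_piFinset_card_level_set_lt (hv : v ∈ s) (m : ℕ) :
    #{x ∈ Fintype.piFinset fun _ : ι ↦ s | #{i | x i = v} < m} =
      partialBinomSum (#s - 1) (Fintype.card ι) m := by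
  have hmaps : ∀ x ∈ {x ∈ Fintype.piFinset fun _ : ι ↦ s | #{i | x i = v} < m},
      ({i | x i = v} : Finset ι) ∈
        (Finset.range m).biUnion (Finset.powersetCard · Finset.univ) := by
    simp
  have hlevel : ∀ r ∈ Finset.range m, ∀ S ∈ Finset.powersetCard r (Finset.univ : Finset ι),
      #{x ∈ {x ∈ Fintype.piFinset fun _ : ι ↦ s | #{i | x i = v} < m} |
        ({i | x i = v} : Finset ι) = S} = (#s - 1) ^ (Fintype.card ι - r) := by
    intro r hr S hS
    obtain rfl := (Finset.mem_powersetCard.1 hS).2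
    rw [← card_filter_piFinset_level_set_eq hv, Finset.filter_filter]
    congr 1
    refine Finset.filter_congr fun x _ ↦ and_iff_right_of_imp ?_
    rintro rfl
    exact Finset.mem_range.1 hr
  rw [Finset.card_eq_sum_card_fiberwise hmaps, Finset.sum_biUnion
    fun a _ b _ hab ↦ Finset.pairwise_disjoint_powersetCard _ hab, partialBinomSum]
  refine Finset.sum_congr rfl fun r hr ↦ ?_
  rw [Finset.sum_const_nat (hlevel r hr), Finset.card_powersetCard, Finset.card_univ]

end Counting

section Box

/-- The set `{0,…,k}` of reals, as a `Finset`; `box n k` is its `n`-th power. -/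
noncomputable def realRange (k : ℕ) : Finset ℝ := (Finset.range (k + 1)).image (↑)

theorem card_realRange (k : ℕ) : #(realRange k) = k + 1 := by
  rw [realRange, Finset.card_image_of_injective _ Nat.cast_injective, Finset.card_range]

theorem natCast_mem_realRange {j k : ℕ} (hj : j ≤ k) : (j : ℝ) ∈ realRange k :=
  Finset.mem_image_of_mem _ (Finset.mem_range_succ_iff.2 hj)

theorem box_eq_coe_piFinset (n k : ℕ) :
    box n k = (Fintype.piFinset fun _ : Fin n ↦ realRange k) := by
  ext x
  simp [box, realRange, eq_comm]

theorem box_finite (n k : ℕ) : (box n k).Finite :=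
  box_eq_coe_piFinset n k ▸ Finset.finite_toSet _

variable {n k : ℕ}

theorem cons_mem_box {t : ℕ} {y : Fin n → ℝ} :
    (Fin.cons (t : ℝ) y : Fin (n + 1) → ℝ) ∈ box (n + 1) k ↔ t ≤ k ∧ y ∈ box n k := by
  simp [box, Fin.forall_fin_succ]

theorem tail_mem_box {x : Fin (n + 1) → ℝ} (hx : x ∈ box (n + 1) k) : Fin.tail x ∈ box n k :=
  fun i ↦ hx i.succ

theorem apply_mem_Icc_of_mem_box {x : Fin n → ℝ} (hx : x ∈ box n k) (i : Fin n) :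
    x i ∈ Icc (0 : ℝ) k := by
  obtain ⟨j, hj, hxj⟩ := hx i
  exact hxj ▸ ⟨j.cast_nonneg, Nat.cast_le.2 hj⟩

theorem one_le_dist_of_mem_box {x y : Fin n → ℝ} (hx : x ∈ box n k) (hy : y ∈ box n k)
    (hxy : x ≠ y) : 1 ≤ dist x y := by
  obtain ⟨i, hi⟩ := Function.ne_iff.1 hxy
  obtain ⟨a, -, ha⟩ := hx i
  obtain ⟨b, -, hb⟩ := hy i
  have hab : a ≠ b := fun hab ↦ hi (by rw [ha, hb, hab])
  calc (1 : ℝ) ≤ dist (a : ℝ) b := by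
        rw [Nat.dist_cast_real]
        exact Nat.pairwise_one_le_dist hab
    _ = dist (x i) (y i) := by rw [ha, hb]
    _ ≤ dist x y := dist_le_pi_dist x y i

end Box

theorem dist_cons {α : Type*} [PseudoMetricSpace α] {n : ℕ} (a b : α) (x y : Fin n → α) :
    dist (Fin.cons a x : Fin (n + 1) → α) (Fin.cons b y) = max (dist a b) (dist x y) := by
  simpa only [Fin.insertNth_zero'] using
    Fin.dist_insertNth_insertNth (α := fun _ ↦ α) 0 a b x y

section Copies

variable {α β γ : Type*} [MetricSpace α] [MetricSpace β] [MetricSpace γ] {M : Set α}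

theorem HasCopy.map {A : Set β} {B : Set γ} (h : HasCopy M A) {g : β → γ}
    (hg : ∀ x ∈ A, ∀ y ∈ A, dist (g x) (g y) = dist x y) (hAB : MapsTo g A B) : HasCopy M B := by
  obtain ⟨f, hf, hfA⟩ := h
  rw [image_subset_iff] at hfA
  refine ⟨g ∘ f, fun x hx y hy ↦ ?_, image_subset_iff.2 fun x hx ↦ hAB (hfA hx)⟩
  exact (hg _ (hfA hx) _ (hfA hy)).trans (hf x hx y hy)

theorem hasCopy_of_subsingleton {A : Set β} (hM : M.Subsingleton) (hA : A.Nonempty) :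
    HasCopy M A := by
  obtain ⟨a, ha⟩ := hA
  exact ⟨fun _ ↦ a, fun x hx y hy ↦ by simp [hM hx hy], image_subset_iff.2 fun _ _ ↦ ha⟩

theorem HasCopy.of_graph {n : ℕ} {A : Set (Fin (n + 1) → ℝ)} {S : Set (Fin n → ℝ)}
    {h : (Fin n → ℝ) → ℝ} (hS : HasCopy M S) (hlip : LipschitzOnWith 1 h S)
    (hA : ∀ y ∈ S, (Fin.cons (h y) y : Fin (n + 1) → ℝ) ∈ A) : HasCopy M A := by
  refine hS.map (g := fun y ↦ Fin.cons (h y) y) (fun x hx y hy ↦ ?_) hA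
  rw [dist_cons]
  exact max_eq_right (by simpa using hlip.dist_le_mul x hx y hy)

end Copies

section UpperBound

variable {n k : ℕ} {A : Set (Fin (n + 1) → ℝ)}

/-- The base points `y` such that the column of `A` over `y` contains all the heights `0, …, j`. -/
def columnCore (A : Set (Fin (n + 1) → ℝ)) (j : ℕ) : Set (Fin n → ℝ) :=
  {y | ∀ i ≤ j, (Fin.cons (i : ℝ) y : Fin (n + 1) → ℝ) ∈ A}

theorem HasCopy.box_succ {m : ℕ} (h : HasCopy (box m k) (columnCore A k)) :
    HasCopy (box (m + 1) k) A := by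
  obtain ⟨f, hf, hfA⟩ := h
  rw [image_subset_iff] at hfA
  refine ⟨fun x ↦ Fin.cons (x 0) (f (Fin.tail x)), fun x hx y hy ↦ ?_, ?_⟩
  · rw [dist_cons, hf _ (tail_mem_box hx) _ (tail_mem_box hy), ← dist_cons, Fin.cons_self_tail,
      Fin.cons_self_tail]
  · rintro _ ⟨x, hx, rfl⟩
    obtain ⟨j, hj, hxj⟩ := hx 0
    simpa only [hxj] using hfA (tail_mem_box hx) j hj

/-- The projection of the `j`-th layer of `A`: the base points whose column has its least gap above
height `j`, or else contains `j + 1`. -/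
def layerBase (A : Set (Fin (n + 1) → ℝ)) (j : ℕ) : Set (Fin n → ℝ) :=
  columnCore A j ∪ {y | (Fin.cons ((j + 1 : ℕ) : ℝ) y : Fin (n + 1) → ℝ) ∈ A}

open Classical in
/-- The function whose graph over `layerBase A j` is the `j`-th layer of `A`. -/
noncomputable def layerHeight (A : Set (Fin (n + 1) → ℝ)) (j : ℕ) (y : Fin n → ℝ) : ℕ :=
  if y ∈ columnCore A j then j else j + 1

theorem columnCore_subset_box (hA : A ⊆ box (n + 1) k) (j : ℕ) : columnCore A j ⊆ box n k :=
  fun _ hy ↦ (cons_mem_box.1 (hA (hy 0 j.zero_le))).2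

theorem layerBase_subset_box (hA : A ⊆ box (n + 1) k) (j : ℕ) : layerBase A j ⊆ box n k :=
  union_subset (columnCore_subset_box hA j) fun _ hy ↦ (cons_mem_box.1 (hA hy)).2

theorem cons_layerHeight_mem {j : ℕ} {y : Fin n → ℝ} (hy : y ∈ layerBase A j) :
    (Fin.cons (layerHeight A j y : ℝ) y : Fin (n + 1) → ℝ) ∈ A := by
  by_cases hcore : y ∈ columnCore A j
  · rw [layerHeight, if_pos hcore]
    exact hcore j le_rfl
  · rw [layerHeight, if_neg hcore]
    exact hy.resolve_left hcore

theorem lipschitzOnWith_layerHeight (A : Set (Fin (n + 1) → ℝ)) (j : ℕ) :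
    LipschitzOnWith 1 (fun y ↦ (layerHeight A j y : ℝ)) (box n k) := by
  refine LipschitzOnWith.mk_one fun x hx y hy ↦ ?_
  rcases eq_or_ne x y with rfl | hxy
  · simp
  · refine le_trans ?_ (one_le_dist_of_mem_box hx hy hxy)
    unfold layerHeight
    split_ifs <;> simp

theorem HasCopy.of_layerBase {α : Type*} [MetricSpace α] {M : Set α} {j : ℕ}
    (hA : A ⊆ box (n + 1) k) (h : HasCopy M (layerBase A j)) : HasCopy M A :=
  h.of_graph ((lipschitzOnWith_layerHeight A j).mono (layerBase_subset_box hA j))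
    fun _ ↦ cons_layerHeight_mem

theorem mem_columnCore_succ {j : ℕ} {y : Fin n → ℝ} :
    y ∈ columnCore A (j + 1) ↔
      y ∈ columnCore A j ∧ (Fin.cons ((j + 1 : ℕ) : ℝ) y : Fin (n + 1) → ℝ) ∈ A := by
  simp only [columnCore, mem_ofPred_eq, Nat.le_succ_iff, or_imp, forall_and, forall_eq]

theorem exists_layerHeight_eq_of_notMem_columnCore {t : ℕ} {y : Fin n → ℝ}
    (hy : (Fin.cons (t : ℝ) y : Fin (n + 1) → ℝ) ∈ A) (hcore : y ∉ columnCore A t) :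
    ∃ j < t, y ∈ layerBase A j ∧ layerHeight A j y = t := by
  cases t with
  | zero => exact absurd (fun i hi ↦ by rwa [Nat.le_zero.1 hi]) hcore
  | succ j =>
    have hj : y ∉ columnCore A j := fun hj ↦ hcore (mem_columnCore_succ.2 ⟨hj, hy⟩)
    exact ⟨j, j.lt_succ_self, Or.inr hy, if_neg hj⟩

theorem subset_iUnion_layers_union (hA : A ⊆ box (n + 1) k) :
    A ⊆ (⋃ j ∈ Finset.range k, (fun y ↦ Fin.cons (layerHeight A j y : ℝ) y) '' layerBase A j) ∪
      (fun y ↦ Fin.cons (k : ℝ) y) '' columnCore A k := by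
  intro x hx
  obtain ⟨t, htk, hxt⟩ := hA hx 0
  obtain ⟨y, rfl⟩ : ∃ y : Fin n → ℝ, x = Fin.cons (t : ℝ) y :=
    ⟨Fin.tail x, by rw [← hxt, Fin.cons_self_tail]⟩
  simp only [mem_union, mem_iUnion, Finset.mem_range]
  by_cases hcore : y ∈ columnCore A t
  · rcases htk.lt_or_eq with hlt | rfl
    · exact Or.inl ⟨t, hlt, y, Or.inl hcore, by simp only [layerHeight, if_pos hcore]⟩
    · exact Or.inr ⟨y, hcore, rfl⟩
  · obtain ⟨j, hjt, hyj, hheight⟩ := exists_layerHeight_eq_of_notMem_columnCore hx hcore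
    exact Or.inl ⟨j, hjt.trans_le htk, y, hyj, by simp only [hheight]⟩

theorem ncard_le_sum_ncard_layerBase_add (hA : A ⊆ box (n + 1) k) :
    A.ncard ≤ ∑ j ∈ Finset.range k, (layerBase A j).ncard + (columnCore A k).ncard := by
  have hbase (j : ℕ) : (layerBase A j).Finite := (box_finite n k).subset (layerBase_subset_box hA j)
  have hcore : (columnCore A k).Finite := (box_finite n k).subset (columnCore_subset_box hA k)
  have hlayers := (Finset.range k).finite_toSet.biUnion fun j _ ↦
    (hbase j).image fun y ↦ (Fin.cons (layerHeight A j y : ℝ) y : Fin (n + 1) → ℝ)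
  refine (ncard_le_ncard (subset_iUnion_layers_union hA) (hlayers.union (hcore.image _))).trans ?_
  refine (ncard_union_le _ _).trans (add_le_add ?_ (ncard_image_le hcore))
  exact (Finset.set_ncard_biUnion_le _ _).trans
    (Finset.sum_le_sum fun j _ ↦ ncard_image_le (hbase j))

end UpperBound

theorem eq_empty_of_not_hasCopy_box_zero {α : Type*} [MetricSpace α] {A : Set α} {k : ℕ}
    (hcopy : ¬HasCopy (box 0 k) A) : A = ∅ :=
  not_nonempty_iff_eq_empty.1 fun hne ↦
    hcopy (hasCopy_of_subsingleton subsingleton_of_subsingleton hne)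

theorem ncard_le_partialBinomSum {k n m : ℕ} {A : Set (Fin n → ℝ)} (hA : A ⊆ box n k)
    (hcopy : ¬HasCopy (box m k) A) : A.ncard ≤ partialBinomSum k n m := by
  induction n generalizing m with
  | zero =>
    cases m with
    | zero => simp [eq_empty_of_not_hasCopy_box_zero hcopy]
    | succ m =>
      rw [partialBinomSum_zero_succ]
      exact ncard_le_one_of_subsingleton A
  | succ n ih =>
    cases m with
    | zero => simp [eq_empty_of_not_hasCopy_box_zero hcopy]
    | succ m =>
      have hlayer (j : ℕ) : (layerBase A j).ncard ≤ partialBinomSum k n (m + 1) :=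
        ih (layerBase_subset_box hA j) fun h ↦ hcopy (h.of_layerBase hA)
      have hcore : (columnCore A k).ncard ≤ partialBinomSum k n m :=
        ih (columnCore_subset_box hA k) fun h ↦ hcopy h.box_succ
      calc A.ncard ≤ ∑ j ∈ Finset.range k, (layerBase A j).ncard + (columnCore A k).ncard :=
            ncard_le_sum_ncard_layerBase_add hA
        _ ≤ ∑ _j ∈ Finset.range k, partialBinomSum k n (m + 1) + partialBinomSum k n m := by
            gcongr with j
            exact hlayer j
        _ = partialBinomSum k (n + 1) (m + 1) := by
            rw [partialBinomSum_succ_succ, Finset.sum_const, Finset.card_range, smul_eq_mul]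

section LowerBound

variable {m n k v : ℕ}

/-- The point at height `t` on the axis in direction `j` through the point `(v, …, v)`. -/
def axisPoint (v : ℝ) (j : Fin m) (t : ℝ) : Fin m → ℝ := Function.update (fun _ ↦ v) j t

theorem axisPoint_mem_box {t : ℕ} (hv : v ≤ k) (ht : t ≤ k) (j : Fin m) :
    axisPoint v j t ∈ box m k := by
  intro i
  rcases eq_or_ne i j with rfl | hij
  · exact ⟨t, ht, Function.update_self ..⟩
  · exact ⟨v, hv, Function.update_of_ne hij ..⟩

theorem axisPoint_zero_mem_box (hv : v ≤ k) (j : Fin m) : axisPoint v j 0 ∈ box m k :=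
  Nat.cast_zero (R := ℝ) ▸ axisPoint_mem_box hv k.zero_le j

theorem dist_axisPoint_le_iff {v t r : ℝ} {z : Fin m → ℝ} {j : Fin m} (hr : 0 ≤ r) :
    dist z (axisPoint v j t) ≤ r ↔ dist (z j) t ≤ r ∧ ∀ l ≠ j, dist (z l) v ≤ r := by
  rw [dist_pi_le_iff hr]
  exact Function.forall_update_iff _ fun l x ↦ dist (z l) x ≤ r

theorem dist_axisPoint_axisPoint_self (v s t : ℝ) (j : Fin m) :
    dist (axisPoint v j s) (axisPoint v j t) = dist s t := by
  refine le_antisymm ((dist_axisPoint_le_iff dist_nonneg).2 ⟨?_, fun l hl ↦ ?_⟩) ?_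
  · simp [axisPoint]
  · simp [axisPoint, hl]
  · simpa [axisPoint] using dist_le_pi_dist (axisPoint v j s) (axisPoint v j t) j

theorem dist_axisPoint_axisPoint_le_of_ne {v s t r : ℝ} {j l : Fin m} (hjl : j ≠ l)
    (hs : dist s v ≤ r) (ht : dist v t ≤ r) :
    dist (axisPoint v j s) (axisPoint v l t) ≤ r := by
  have hr : 0 ≤ r := dist_nonneg.trans hs
  refine (dist_axisPoint_le_iff hr).2 ⟨by simpa [axisPoint, hjl.symm] using ht, fun q _ ↦ ?_⟩
  rcases eq_or_ne q j with rfl | hqj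
  · simpa [axisPoint] using hs
  · simpa [axisPoint, hqj] using hr

/-- The function `g` takes the extreme values `0` and `k`, in either order, at the two ends of the
axis of `{0,…,k}^m` in direction `j` through `(v, …, v)`. -/
def SpansAxis (g : (Fin m → ℝ) → ℝ) (k v : ℝ) (j : Fin m) : Prop :=
  (g (axisPoint v j 0) = 0 ∧ g (axisPoint v j k) = k) ∨
    (g (axisPoint v j 0) = k ∧ g (axisPoint v j k) = 0)

theorem exists_opposite_of_dist_eq (hk : 0 < k) {x y : Fin n → ℝ} (hx : x ∈ box n k)
    (hy : y ∈ box n k) (hxy : dist x y = k) :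
    ∃ i, (x i = 0 ∧ y i = k) ∨ (x i = k ∧ y i = 0) := by
  obtain ⟨⟨i, hi⟩, -⟩ := (dist_pi_eq_iff (Nat.cast_pos.2 hk)).1 hxy
  obtain ⟨hx₀, hxk⟩ := apply_mem_Icc_of_mem_box hx i
  obtain ⟨hy₀, hyk⟩ := apply_mem_Icc_of_mem_box hy i
  rw [Real.dist_eq, abs_eq k.cast_nonneg] at hi
  refine ⟨i, hi.symm.imp ?_ ?_⟩ <;> exact fun h ↦ ⟨by linarith, by linarith⟩

theorem exists_spansAxis {f : (Fin m → ℝ) → Fin n → ℝ} (hk : 0 < k) (hv : v ≤ k)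
    (hf : ∀ x ∈ box m k, ∀ y ∈ box m k, dist (f x) (f y) = dist x y)
    (hbox : MapsTo f (box m k) (box n k)) (j : Fin m) :
    ∃ i, SpansAxis (fun x ↦ f x i) k v j := by
  have hstart := axisPoint_zero_mem_box hv j
  have hend := axisPoint_mem_box hv le_rfl j
  refine exists_opposite_of_dist_eq hk (hbox hstart) (hbox hend) ?_
  rw [hf _ hstart _ hend, dist_axisPoint_axisPoint_self, dist_zero_left, Real.norm_natCast]

variable {g : (Fin m → ℝ) → ℝ} {j l : Fin m}

theorem SpansAxis.direction_unique (hv : 0 < v) (hvk : v < k)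
    (hg : LipschitzOnWith 1 g (box m k)) (hj : SpansAxis g k v j) (hl : SpansAxis g k v l) :
    j = l := by
  by_contra hjl
  rw [← Nat.cast_pos (α := ℝ)] at hv
  have hvk' : (v : ℝ) < k := Nat.cast_lt.2 hvk
  have hclose {s : ℝ} (hs : dist s v < k) (hmem : axisPoint v j s ∈ box m k) :
      dist (g (axisPoint v j s)) (g (axisPoint v l 0)) < k := by
    have h₀ : dist (v : ℝ) 0 < k := by simpa using hvk'
    calc dist (g (axisPoint v j s)) (g (axisPoint v l 0))
        ≤ dist (axisPoint v j s) (axisPoint (v : ℝ) l 0) := by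
          simpa using hg.dist_le_mul _ hmem _ (axisPoint_zero_mem_box hvk.le l)
      _ ≤ max (dist s v) (dist (v : ℝ) 0) :=
          dist_axisPoint_axisPoint_le_of_ne hjl (le_max_left ..) (le_max_right ..)
      _ < k := max_lt hs h₀
  have hstart := hclose (by simpa using hvk') (axisPoint_zero_mem_box hvk.le j)
  have hend := hclose (by rw [Real.dist_eq, abs_lt]; constructor <;> linarith)
    (axisPoint_mem_box hvk.le le_rfl j)
  rw [Real.dist_eq, abs_lt] at hstart hend
  rcases hj with hj | hj <;> rcases hl with hl | hl <;> linarith [hj.1, hj.2, hl.1]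

theorem dist_apply_axisPoint_le_of_close (hv : v ≤ k) (hg : LipschitzOnWith 1 g (box m k))
    {z : Fin m → ℝ} (hz : z ∈ box m k) (hclose : ∀ l ≠ j, dist (z l) v ≤ min (z j) (k - z j)) :
    dist (g z) (g (axisPoint v j 0)) ≤ z j ∧ dist (g z) (g (axisPoint v j k)) ≤ k - z j := by
  obtain ⟨hz₀, hzk⟩ := apply_mem_Icc_of_mem_box hz j
  have hstart : dist z (axisPoint v j 0) ≤ z j := (dist_axisPoint_le_iff hz₀).2
    ⟨by simp [abs_of_nonneg hz₀], fun l hl ↦ (hclose l hl).trans (min_le_left ..)⟩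
  have hend : dist z (axisPoint v j k) ≤ k - z j := (dist_axisPoint_le_iff (sub_nonneg.2 hzk)).2
    ⟨by rw [dist_comm, Real.dist_eq, abs_of_nonneg (sub_nonneg.2 hzk)],
      fun l hl ↦ (hclose l hl).trans (min_le_right ..)⟩
  have hlip {y : Fin m → ℝ} (hy : y ∈ box m k) : dist (g z) (g y) ≤ dist z y := by
    simpa using hg.dist_le_mul _ hz _ hy
  exact ⟨(hlip (axisPoint_zero_mem_box hv j)).trans hstart,
    (hlip (axisPoint_mem_box hv le_rfl j)).trans hend⟩

theorem SpansAxis.exists_forall_apply_eq (hv : v ≤ k) (hg : LipschitzOnWith 1 g (box m k))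
    (hj : SpansAxis g k v j) :
    ∃ t : ℕ, (t = v ∨ t = k - v) ∧ ∀ z ∈ box m k, z j = t →
      (∀ l, dist (z l) v ≤ min (v : ℝ) (k - v)) → g z = v := by
  rcases hj with ⟨hstart, hend⟩ | ⟨hstart, hend⟩
  · refine ⟨v, Or.inl rfl, fun z hz hzj hclose ↦ ?_⟩
    obtain ⟨h₁, h₂⟩ := dist_apply_axisPoint_le_of_close (j := j) hv hg hz fun l _ ↦ by
      simpa only [hzj] using hclose l
    rw [hstart, hzj, Real.dist_eq, abs_le] at h₁
    rw [hend, hzj, Real.dist_eq, abs_le] at h₂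
    linarith
  · refine ⟨k - v, Or.inr rfl, fun z hz hzj hclose ↦ ?_⟩
    rw [Nat.cast_sub hv] at hzj
    obtain ⟨h₁, h₂⟩ := dist_apply_axisPoint_le_of_close (j := j) hv hg hz fun l _ ↦ by
      simpa only [hzj, sub_sub_cancel, min_comm] using hclose l
    rw [hstart, hzj, Real.dist_eq, abs_le] at h₁
    rw [hend, hzj, Real.dist_eq, abs_le] at h₂
    linarith

theorem exists_le_card_apply_eq (hk : 0 < k) (hkv : k ≤ 3 * v) (hvk : 3 * v ≤ 2 * k)
    {f : (Fin m → ℝ) → Fin n → ℝ}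
    (hf : ∀ x ∈ box m k, ∀ y ∈ box m k, dist (f x) (f y) = dist x y)
    (hbox : MapsTo f (box m k) (box n k)) :
    ∃ z ∈ box m k, m ≤ #{i | f z i = v} := by
  have hv : v ≤ k := by omega
  have hlip (i : Fin n) : LipschitzOnWith 1 (fun x ↦ f x i) (box m k) :=
    LipschitzOnWith.mk_one fun x hx y hy ↦ (dist_le_pi_dist _ _ i).trans (hf x hx y hy).le
  choose i hi using exists_spansAxis hk hv hf hbox
  choose t ht hft using fun j ↦ (hi j).exists_forall_apply_eq hv (hlip (i j))
  have hinj : Function.Injective i := fun j l hjl ↦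
    (hi j).direction_unique (by omega) (by omega) (hlip (i j)) (hjl ▸ hi l)
  have hz : (fun j ↦ (t j : ℝ)) ∈ box m k := fun j ↦ ⟨t j, by grind, rfl⟩
  have hclose (l : Fin m) : dist (t l : ℝ) v ≤ min (v : ℝ) (k - v) := by
    have hkv' : (k : ℝ) ≤ 3 * v := mod_cast hkv
    have hvk' : 3 * (v : ℝ) ≤ 2 * k := mod_cast hvk
    rw [le_min_iff, Real.dist_eq, abs_le, abs_le]
    rcases ht l with h | h <;> rw [h]
    · grind
    · rw [Nat.cast_sub hv]
      grind
  refine ⟨_, hz, ?_⟩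
  calc m = #(Finset.univ.image i) := by simp [Finset.card_image_of_injective _ hinj]
    _ ≤ #{q | f (fun j ↦ (t j : ℝ)) q = v} := Finset.card_le_card fun q hq ↦ by
      obtain ⟨j, -, rfl⟩ := Finset.mem_image.1 hq
      simpa using hft j _ hz rfl hclose

/-- The points of `{0,…,k}^n` with fewer than `m` coordinates equal to `v`; the extremal example for
`v` in the middle third of `{0,…,k}`. -/
def boxFewEq (n k m v : ℕ) : Set (Fin n → ℝ) :=
  {x ∈ box n k | #{i | x i = v} < m}

theorem not_hasCopy_boxFewEq (hk : 0 < k) (hkv : k ≤ 3 * v) (hvk : 3 * v ≤ 2 * k) :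
    ¬HasCopy (box m k) (boxFewEq n k m v) := by
  rintro ⟨f, hf, hfimage⟩
  rw [image_subset_iff] at hfimage
  obtain ⟨z, hz, hcard⟩ := exists_le_card_apply_eq hk hkv hvk hf fun x hx ↦ (hfimage hx).1
  exact hcard.not_gt (hfimage hz).2

theorem ncard_boxFewEq (hv : v ≤ k) : (boxFewEq n k m v).ncard = partialBinomSum k n m := by
  have hcoe : boxFewEq n k m v =
      ({x ∈ Fintype.piFinset fun _ ↦ realRange k | #{i | x i = v} < m} : Finset (Fin n → ℝ)) := by
    rw [boxFewEq, box_eq_coe_piFinset, Finset.coe_filter]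
    rfl
  rw [hcoe, ncard_coe_finset, card_filter_piFinset_card_level_set_lt (natCast_mem_realRange hv),
    card_realRange, Fintype.card_fin, Nat.add_sub_cancel]

end LowerBound

/-- For `k ≥ 2` and `m, n ≥ 1`, the maximum cardinality of a subset of `{0,…,k}^n`
(max metric) containing no isometric copy of `{0,…,k}^m` equals
`∑_{i=0}^{m−1} C(n,i) k^(n−i)`. -/
theorem alpha_box_power (k m n : ℕ) (hk : 2 ≤ k) (hm : 1 ≤ m) (hn : 1 ≤ n) :
    sSup {c : ℕ | ∃ Y ⊆ box n k, Y.ncard = c ∧ ¬ HasCopy (box m k) Y}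
  = ∑ i ∈ Finset.range m, n.choose i * k ^ (n - i) := by
  have hmax : IsGreatest {c : ℕ | ∃ Y ⊆ box n k, Y.ncard = c ∧ ¬ HasCopy (box m k) Y}
      (partialBinomSum k n m) := by
    constructor
    · exact ⟨boxFewEq n k m (k / 2), sep_subset .., ncard_boxFewEq (Nat.div_le_self k 2),
        not_hasCopy_boxFewEq (by omega) (by omega) (by omega)⟩
    · rintro _ ⟨Y, hY, rfl, hcopy⟩
      exact ncard_le_partialBinomSum hY hcopy
  exact hmax.csSup_eq
end

section
/- For every n ∈ ℕ and every 0 < ε ≤ 1/2 there exists q_0 > 0 such that the following holds for every 0 < q ≤ q_0: for every colouring of the cube [−ε, 1+ε]^n ⊂ ℝ^n (equipped with the max-norm metric) with n colours, some colour class contains a monochromatic proper isometric copy of G(q). -/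
open Set Filter

/-!
If the colour `i` misses some slice `x i = v` of a box, that slice is a box of one dimension less
in which one colour fewer occurs, and induction on the dimension gives a copy. So suppose every
slice orthogonal to every direction `i` meets the colour `i`. Shrink the box by the factor `q`
again and again about a fixed pivot. If some shrunken box contains a copy at its own scale,
proper in direction `i`, then prepending a point of colour `i` from a slice of the next larger box,
taken at the right height, gives a copy at the larger scale, and so on up to the original box.
Otherwise, by the same dichotomy, the slices of all shrunken boxes meet their colours, and choosing
one point of colour `i` in each box, at heights decreasing geometrically to the pivot, gives a copy
directly.
-/

section ProperCopy

variable {ι : Type*} [Fintype ι] {q r : ℝ} {i : ι} {A A' : Set (ι → ℝ)} {x : ℕ → ι → ℝ}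

/-- The sequence `x` enumerates, inside `A`, a copy of `r • G(q)` that is proper in direction `i`:
the `i`-th coordinates form a translate of `-r • G(q)`. Only the distances of consecutive points
are bounded; `IsProperCopy.dist_eq_dist_coord` recovers all others. -/
structure IsProperCopy (q r : ℝ) (i : ι) (A : Set (ι → ℝ)) (x : ℕ → ι → ℝ) : Prop where
  mem : ∀ k, x k ∈ A
  coord_succ : ∀ k, x (k + 1) i = x k i - r * q ^ k
  dist_succ_le : ∀ k, dist (x k) (x (k + 1)) ≤ r * q ^ k

namespace IsProperCopy

lemma mono (h : IsProperCopy q r i A x) (hA : A ⊆ A') : IsProperCopy q r i A' x where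
  mem k := hA (h.mem k)
  coord_succ := h.coord_succ
  dist_succ_le := h.dist_succ_le

lemma exists_cons {y : ι → ℝ} (h : IsProperCopy q (r * q) i A x) (hy : y ∈ A)
    (hyi : x 0 i = y i - r) (hdist : dist y (x 0) ≤ r) : ∃ z, IsProperCopy q r i A z := by
  refine ⟨fun | 0 => y | k + 1 => x k, ?_, ?_, ?_⟩
  · rintro (_ | k)
    exacts [hy, h.mem k]
  · rintro (_ | k)
    · simpa using hyi
    · simpa only [pow_succ', mul_assoc] using h.coord_succ k
  · rintro (_ | k)
    · simpa using hdist
    · simpa only [pow_succ', mul_assoc] using h.dist_succ_le k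

lemma coord_eq (h : IsProperCopy q r i A x) (k : ℕ) :
    x k i = x 0 i - r * ∑ l ∈ Finset.range k, q ^ l := by
  induction k with
  | zero => simp
  | succ k ih => rw [h.coord_succ, ih, Finset.sum_range_succ]; ring

lemma dist_eq_dist_coord (h : IsProperCopy q r i A x) (k l : ℕ) :
    dist (x k) (x l) = dist (x k i) (x l i) := by
  wlog hkl : k ≤ l generalizing k l
  · rw [dist_comm, this l k (le_of_not_ge hkl), dist_comm]
  refine le_antisymm ?_ (dist_le_pi_dist _ _ i)
  calc dist (x k) (x l) ≤ ∑ m ∈ Finset.Ico k l, r * q ^ m :=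
        dist_le_Ico_sum_of_dist_le hkl fun _ _ => h.dist_succ_le _
    _ = x k i - x l i := by
        rw [← Finset.mul_sum, Finset.sum_Ico_eq_sub _ hkl, h.coord_eq k, h.coord_eq l]; ring
    _ ≤ dist (x k i) (x l i) := le_abs_self _

lemma exists_map_geomSet (h : IsProperCopy q 1 i A x) :
    ∃ f : ℝ → ι → ℝ, (∀ s ∈ geomSet q, ∀ t ∈ geomSet q, dist (f s) (f t) = dist s t) ∧
      (∀ s ∈ geomSet q, f s ∈ A) ∧ ∀ s ∈ geomSet q, f s i = f 0 i - s := by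
  have hindex : ∀ s ∈ geomSet q, ∃ m, ∑ l ∈ Finset.range m, q ^ l = s := fun _ hs => hs
  choose! m hm using hindex
  have hcoord : ∀ s ∈ geomSet q, x (m s) i = x 0 i - s := fun s hs => by
    rw [h.coord_eq, hm s hs, one_mul]
  have hzero : (0 : ℝ) ∈ geomSet q := ⟨0, Finset.sum_range_zero _⟩
  refine ⟨fun s => x (m s), fun s hs t ht => ?_, fun s _ => h.mem _, fun s hs => ?_⟩
  · rw [h.dist_eq_dist_coord, hcoord s hs, hcoord t ht, dist_sub_left]
  · simp only [hcoord s hs, hcoord 0 hzero, sub_zero]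

end IsProperCopy

/-- Some colour `i ∈ S` contains a copy of `r • G(q)` inside `A` that is proper in direction `i`;
colours are identified with coordinate directions. -/
def HasProperCopy (c : (ι → ℝ) → ι) (q r : ℝ) (S : Finset ι) (A : Set (ι → ℝ)) : Prop :=
  ∃ i ∈ S, ∃ x, IsProperCopy q r i (A ∩ c ⁻¹' {i}) x

lemma HasProperCopy.mono {c : (ι → ℝ) → ι} {S S' : Finset ι} (h : HasProperCopy c q r S A)
    (hS : S ⊆ S') (hA : A ⊆ A') : HasProperCopy c q r S' A' :=
  let ⟨i, hi, x, hx⟩ := h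
  ⟨i, hS hi, x, hx.mono (inter_subset_inter_left _ hA)⟩

end ProperCopy

section Boxes

variable {ι : Type*} {S : Finset ι} {b p x y : ι → ℝ} {ε R R' v : ℝ} {i : ι}

/-- The box of side `(1 + ε) * R` in the coordinates of `S`, the other coordinates being those of
`b`. It is placed so that the boxes with the same pivot `p` are homothetic about `p`. -/
def pivotBox (S : Finset ι) (b p : ι → ℝ) (ε R : ℝ) : Set (ι → ℝ) :=
  {x | (∀ j ∈ S, x j - p j ∈ Icc (-(3 / 4 * ε * R)) ((1 + ε / 4) * R)) ∧ ∀ j ∉ S, x j = b j}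

/-- The part of the hyperplane `y i = v` in `pivotBox S b p ε R` where the other free coordinates
stay `ε / 2 * R` below the upper end. It is again a box, with `ε / 2` in place of `ε`, and lies low
enough for a point at height `x i + R` to be within `R` of any `x` in a much smaller box with the
same pivot. -/
def pivotSlice (S : Finset ι) (b p : ι → ℝ) (ε R : ℝ) (i : ι) (v : ℝ) : Set (ι → ℝ) :=
  {y | y i = v ∧ (∀ j ∈ S, j ≠ i → y j - p j ∈ Icc (-(3 / 4 * ε * R)) ((1 - ε / 4) * R)) ∧
    ∀ j ∉ S, y j = b j}

lemma pivotBox_mono (hε : 0 ≤ ε) (hR : R' ≤ R) : pivotBox S b p ε R' ⊆ pivotBox S b p ε R :=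
  fun _ hx => ⟨fun j hj => Icc_subset_Icc (by gcongr) (by gcongr) (hx.1 j hj), hx.2⟩

lemma pivotSlice_subset_pivotBox (hεR : 0 ≤ ε * R)
    (hv : v - p i ∈ Icc (-(3 / 4 * ε * R)) ((1 + ε / 4) * R)) :
    pivotSlice S b p ε R i v ⊆ pivotBox S b p ε R := by
  rintro y ⟨rfl, hfree, hfix⟩
  refine ⟨fun j hj => ?_, hfix⟩
  obtain rfl | hji := eq_or_ne j i
  · exact hv
  · exact Icc_subset_Icc_right (by linarith) (hfree j hj hji)

lemma pivotSlice_eq_pivotBox [DecidableEq ι] (hi : i ∈ S) :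
    pivotSlice S b p ε R i v =
      pivotBox (S.erase i) (Function.update b i v) (fun j => p j - 3 / 8 * ε * R) (ε / 2) R := by
  have hIcc (t u : ℝ) : t - u ∈ Icc (-(3 / 4 * ε * R)) ((1 - ε / 4) * R) ↔
      t - (u - 3 / 8 * ε * R) ∈ Icc (-(3 / 4 * (ε / 2) * R)) ((1 + ε / 2 / 4) * R) := by
    constructor <;> rintro ⟨hlower, hupper⟩ <;> constructor <;> linarith
  ext y
  simp only [pivotSlice, pivotBox, mem_ofPred_eq, Finset.mem_erase, hIcc]
  constructor
  · rintro ⟨rfl, hfree, hfix⟩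
    refine ⟨fun j hj => hfree j hj.2 hj.1, fun j hj => ?_⟩
    obtain rfl | hji := eq_or_ne j i
    · simp
    · simpa [hji] using hfix j fun hjS => hj ⟨hji, hjS⟩
  · rintro ⟨hfree, hfix⟩
    refine ⟨by simpa using hfix i (by simp), fun j hj hji => hfree j ⟨hji, hj⟩, fun j hj => ?_⟩
    have hji : j ≠ i := fun h => hj (h ▸ hi)
    simpa [hji] using hfix j fun h => hj h.2

lemma dist_le_of_mem_pivotSlice [Fintype ι] (hε : ε ≤ 1) (hR : 0 ≤ R) (hR' : 0 ≤ R')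
    (hRR' : 8 * R' ≤ ε * R) (hy : y ∈ pivotSlice S b p ε R i v) (hx : x ∈ pivotBox S b p ε R')
    (hxv : x i = v - R) : dist y x ≤ R := by
  obtain ⟨rfl, hfree, hfix⟩ := hy
  refine (dist_pi_le_iff hR).2 fun j => ?_
  rw [Real.dist_eq]
  obtain rfl | hji := eq_or_ne j i
  · rw [hxv, sub_sub_cancel, abs_of_nonneg hR]
  by_cases hj : j ∈ S
  · have hεR' : ε * R' ≤ R' := mul_le_of_le_one_left hR' hε
    have hεR : ε * R ≤ R := mul_le_of_le_one_left hR hε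
    obtain ⟨hyl, hyu⟩ := hfree j hj hji
    obtain ⟨hxl, hxu⟩ := hx.1 j hj
    rw [abs_le]
    constructor <;> linarith
  · rwa [hfix j hj, hx.2 j hj, sub_self, abs_zero]

end Boxes

section Colouring

variable {ι : Type*} {c : (ι → ℝ) → ι} {S : Finset ι} {b p : ι → ℝ} {ε q r R : ℝ}

/-- For every `i ∈ S`, the colour `i` occurs in every slice of `pivotBox S b p ε R` in
direction `i`. -/
def SlicesMeetColours (c : (ι → ℝ) → ι) (S : Finset ι) (b p : ι → ℝ) (ε R : ℝ) : Prop :=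
  ∀ i ∈ S, ∀ v, v - p i ∈ Icc (-(3 / 4 * ε * R)) ((1 + ε / 4) * R) →
    ∃ y ∈ pivotSlice S b p ε R i v, c y = i

variable [Fintype ι]

lemma HasProperCopy.of_shrink (hε : ε ≤ 1) (hq0 : 0 ≤ q) (hq : 8 * q ≤ ε) (hR : 0 ≤ R)
    (hmeet : SlicesMeetColours c S b p ε R)
    (h : HasProperCopy c q (R * q) S (pivotBox S b p ε (R * q))) :
    HasProperCopy c q R S (pivotBox S b p ε R) := by
  obtain ⟨i, hi, x, hx⟩ := h
  have hε0 : 0 ≤ ε := by linarith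
  have hRq : 0 ≤ R * q := by positivity
  have hRq8 : 8 * (R * q) ≤ ε * R := by nlinarith
  have hx0 : x 0 ∈ pivotBox S b p ε (R * q) := (hx.mem 0).1
  have hv : x 0 i + R - p i ∈ Icc (-(3 / 4 * ε * R)) ((1 + ε / 4) * R) := by
    have hεRq : ε * (R * q) ≤ R * q := mul_le_of_le_one_left hRq hε
    obtain ⟨hxl, hxu⟩ := hx0.1 i hi
    constructor <;> linarith
  obtain ⟨y, hy, hyc⟩ := hmeet i hi _ hv
  have hsub : pivotBox S b p ε (R * q) ⊆ pivotBox S b p ε R :=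
    pivotBox_mono hε0 (by nlinarith)
  have hxi : x 0 i = y i - R := by rw [hy.1, add_sub_cancel_right]
  exact ⟨i, hi, (hx.mono (inter_subset_inter_left _ hsub)).exists_cons
    ⟨pivotSlice_subset_pivotBox (by positivity) hv hy, hyc⟩ hxi
    (dist_le_of_mem_pivotSlice hε hR hRq hRq8 hy hx0 (by ring))⟩

lemma hasProperCopy_of_forall_slicesMeetColours (hε : ε ≤ 1) (hq0 : 0 ≤ q) (hq : 8 * q ≤ ε)
    (hr : 0 ≤ r) (hS : S.Nonempty) (hmeet : ∀ k, SlicesMeetColours c S b p ε (r * q ^ k)) :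
    HasProperCopy c q r S (pivotBox S b p ε r) := by
  obtain ⟨i, hi⟩ := hS
  have hε0 : 0 ≤ ε := by linarith
  have hq1 : 0 < 1 - q := by linarith
  have hR (k : ℕ) : 0 ≤ r * q ^ k := by positivity
  -- Heights of the form `p i + C * r * q ^ k` drop by `r * q ^ k` exactly when `C = 1 / (1 - q)`.
  let v : ℕ → ℝ := fun k => p i + r * q ^ k / (1 - q)
  have hv_succ (k : ℕ) : v (k + 1) = v k - r * q ^ k := by
    simp only [v]
    field_simp
    ring
  have hv (k : ℕ) : v k - p i ∈ Icc (-(3 / 4 * ε * (r * q ^ k))) ((1 + ε / 4) * (r * q ^ k)) := by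
    have hslope : 1 ≤ (1 + ε / 4) * (1 - q) := by nlinarith
    simp only [v, add_sub_cancel_left]
    refine ⟨(neg_nonpos.2 (by positivity)).trans (div_nonneg (hR k) hq1.le), ?_⟩
    rw [div_le_iff₀ hq1]
    linarith [mul_le_mul_of_nonneg_left hslope (hR k)]
  choose x hx hxc using fun k => hmeet k i hi (v k) (hv k)
  have hxBox (k : ℕ) : x k ∈ pivotBox S b p ε (r * q ^ k) :=
    pivotSlice_subset_pivotBox (mul_nonneg hε0 (hR k)) (hv k) (hx k)
  have hxi (k : ℕ) : x (k + 1) i = v k - r * q ^ k := by rw [(hx (k + 1)).1, hv_succ]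
  refine ⟨i, hi, x, fun k => ⟨pivotBox_mono hε0 ?_ (hxBox k), hxc k⟩, fun k => ?_, fun k => ?_⟩
  · exact mul_le_of_le_one_right hr (pow_le_one₀ hq0 (by linarith))
  · rw [hxi, (hx k).1]
  · have hscale : 8 * (r * q ^ (k + 1)) ≤ ε * (r * q ^ k) := by
      rw [pow_succ]
      linarith [mul_le_mul_of_nonneg_right hq (hR k)]
    exact dist_le_of_mem_pivotSlice hε (hR k) (hR (k + 1)) hscale (hx k) (hxBox (k + 1)) (hxi k)

lemma hasProperCopy_of_forall_or (hε : ε ≤ 1) (hq0 : 0 ≤ q) (hq : 8 * q ≤ ε) (hr : 0 ≤ r)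
    (hS : S.Nonempty)
    (h : ∀ k, HasProperCopy c q (r * q ^ k) S (pivotBox S b p ε (r * q ^ k)) ∨
      SlicesMeetColours c S b p ε (r * q ^ k)) :
    HasProperCopy c q r S (pivotBox S b p ε r) := by
  by_cases hmeet : ∀ k, SlicesMeetColours c S b p ε (r * q ^ k)
  · exact hasProperCopy_of_forall_slicesMeetColours hε hq0 hq hr hS hmeet
  obtain ⟨k, hk⟩ := not_forall.1 hmeet
  have hcopy := (h k).resolve_right hk
  clear hk
  induction k with
  | zero => simpa using hcopy
  | succ k ih =>
    rw [pow_succ, ← mul_assoc] at hcopy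
    exact ih ((h k).elim id (.of_shrink hε hq0 hq (by positivity) · hcopy))

lemma hasProperCopy_or_slicesMeetColours [DecidableEq ι] (hεR : 0 ≤ ε * R)
    (hc : ∀ x ∈ pivotBox S b p ε R, c x ∈ S)
    (hface : ∀ i ∈ S, ∀ b' p', (∀ x ∈ pivotBox (S.erase i) b' p' (ε / 2) R, c x ∈ S.erase i) →
      HasProperCopy c q R (S.erase i) (pivotBox (S.erase i) b' p' (ε / 2) R)) :
    HasProperCopy c q R S (pivotBox S b p ε R) ∨ SlicesMeetColours c S b p ε R := by
  refine or_iff_not_imp_right.2 fun hmiss => ?_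
  simp only [SlicesMeetColours, not_forall, not_exists, not_and] at hmiss
  obtain ⟨i, hi, v, hv, hmiss⟩ := hmiss
  have hslice : pivotSlice S b p ε R i v ⊆ pivotBox S b p ε R :=
    pivotSlice_subset_pivotBox hεR hv
  rw [pivotSlice_eq_pivotBox hi] at hmiss hslice
  refine HasProperCopy.mono (hface i hi _ _ fun y hy => ?_) (S.erase_subset i) hslice
  exact Finset.mem_erase.2 ⟨hmiss y hy, hc y (hslice hy)⟩

theorem hasProperCopy_pivotBox (hε : ε ≤ 1) (hq0 : 0 ≤ q) (hq : 2 ^ (S.card + 2) * q ≤ ε)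
    (hr : 0 ≤ r) (hc : ∀ x ∈ pivotBox S b p ε r, c x ∈ S) :
    HasProperCopy c q r S (pivotBox S b p ε r) := by
  classical
  induction hm : S.card generalizing S b p ε r with
  | zero =>
    obtain rfl := Finset.card_eq_zero.1 hm
    exact absurd (hc b ⟨by simp, by simp⟩) (Finset.notMem_empty _)
  | succ m ih =>
    rw [hm, show m + 1 + 2 = m + 3 from rfl] at hq
    have hq8 : 8 * q ≤ ε := by
      have hpow : (2 : ℝ) ^ 3 ≤ 2 ^ (m + 3) := pow_le_pow_right₀ one_le_two (by omega)
      linarith [mul_le_mul_of_nonneg_right hpow hq0]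
    have hε0 : 0 ≤ ε := by linarith
    refine hasProperCopy_of_forall_or hε hq0 hq8 hr (Finset.card_pos.1 (by omega)) fun k => ?_
    have hR : 0 ≤ r * q ^ k := by positivity
    have hsub : pivotBox S b p ε (r * q ^ k) ⊆ pivotBox S b p ε r :=
      pivotBox_mono hε0 (mul_le_of_le_one_right hr (pow_le_one₀ hq0 (by linarith)))
    refine hasProperCopy_or_slicesMeetColours (mul_nonneg hε0 hR) (fun x hx => hc x (hsub hx))
      fun i hi b' p' hc' => ?_
    have hcard : (S.erase i).card = m := by rw [Finset.card_erase_of_mem hi, hm, Nat.add_sub_cancel]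
    have hqm : 2 ^ (m + 2) * q ≤ ε / 2 := by
      rw [pow_succ] at hq
      linarith
    exact ih (by linarith) (by rwa [hcard]) hR hc' hcard

end Colouring

theorem cube_colouring_proper_copy_general {ι : Type*} [Fintype ι] {ε q : ℝ} (hq0 : 0 ≤ q)
    (hq : q ≤ min ε 1 / 2 ^ (Fintype.card ι + 2)) (c : (ι → ℝ) → ι) (a : ι → ℝ) :
    ∃ (i : ι) (f : ℝ → ι → ℝ),
      (∀ s ∈ geomSet q, ∀ t ∈ geomSet q, dist (f s) (f t) = dist s t) ∧
      (∀ s ∈ geomSet q, f s ∈ Icc a (fun j => a j + (1 + ε)) ∧ c (f s) = i) ∧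
      ∀ s ∈ geomSet q, f s i = f 0 i - s := by
  rw [le_div_iff₀' (by positivity)] at hq
  obtain ⟨i, -, x, hx⟩ := hasProperCopy_pivotBox (c := c) (S := Finset.univ) (b := a)
    (p := fun j => a j + 3 / 4 * min ε 1) (min_le_right ε 1) hq0 hq zero_le_one
    fun _ _ => Finset.mem_univ _
  obtain ⟨f, hdist, hf, hcoord⟩ := hx.exists_map_geomSet
  refine ⟨i, f, hdist, fun s hs => ⟨⟨fun j => ?_, fun j => ?_⟩, (hf s hs).2⟩, hcoord⟩ <;>
    obtain ⟨hlower, hupper⟩ := (hf s hs).1.1 j (Finset.mem_univ j)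
  · linarith
  · linarith [min_le_left ε 1]

/-- For every `n` and `0 < ε ≤ 1/2` there is `q₀ > 0` such that for all `0 < q ≤ q₀`:
every `n`-colouring of the cube `[−ε, 1+ε]^n ⊆ ℝ^n` (max metric) contains a
monochromatic proper isometric copy of `G(q)`, i.e. an isometric copy such that for
some coordinate `idx` the set of `idx`-th coordinates of its points is a translate
of `−G(q)`. -/
theorem cube_colouring_proper_copy (n : ℕ) (ε : ℝ) (hε0 : 0 < ε) (hε : ε ≤ 1 / 2) :
    ∃ q0 : ℝ, 0 < q0 ∧ ∀ q : ℝ, 0 < q → q ≤ q0 →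
      ∀ c : (Fin n → ℝ) → Fin n,
        ∃ (i : Fin n) (f : ℝ → (Fin n → ℝ)),
          (∀ x ∈ geomSet q, ∀ y ∈ geomSet q, dist (f x) (f y) = dist x y) ∧
          (∀ x ∈ geomSet q, (∀ j : Fin n, f x j ∈ Set.Icc (-ε) (1 + ε)) ∧ c (f x) = i) ∧
          (∃ (idx : Fin n) (t : ℝ),
            (fun p => f p idx) '' geomSet q = (fun s => t - s) '' geomSet q) := by
  refine ⟨min ε 1 / 2 ^ (n + 2), by positivity, fun q hq0 hq c => ?_⟩
  obtain ⟨i, f, hdist, hf, hcoord⟩ :=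
    cube_colouring_proper_copy_general hq0.le (by simpa using hq) c (fun _ => -ε)
  exact ⟨i, f, hdist, fun s hs => ⟨fun j => ⟨(hf s hs).1.1 j,
    ((hf s hs).1.2 j).trans (by linarith)⟩, (hf s hs).2⟩, i, f 0 i, image_congr hcoord⟩
end
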